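/- arXiv:1511.09280 — 6 statements merged into one kernel-verified Lean document; each statement's English description precedes it below -/
import Mathlib

section
/- Let X be a Cantor space and g a minimal homeomorphism of X. Then the closure of the full group [g] in Homeo(X) (with the topology of uniform convergence) equals the set of all homeomorphisms h of X such that h_*μ = μ for every g-invariant Borel probability measure μ on X. -/
open MeasureTheory

namespace DynSimplex

variable {X : Type*} [TopologicalSpace X] [MeasurableSpace X] [OpensMeasurableSpace X]

/-- `g` preserves the probability measure `μ`, i.e. `g_*μ = μ`. -/
def Preserves (g : X ≃ₜ X) (μ : ProbabilityMeasure X) : Prop :=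
  (μ : Measure X).map g = (μ : Measure X)

/-- A homeomorphism is minimal if all of its (two-sided) orbits are dense. -/
def IsMinimal (g : X ≃ₜ X) : Prop :=
  ∀ x : X, Dense (Set.range fun n : ℤ => (g.toEquiv ^ n) x)

/-- A set of probability measures is good if for all clopen `A`, `B` with `μ A < μ B` for
all `μ ∈ K`, there is a clopen `C ⊆ B` with `μ C = μ A` for all `μ ∈ K`. -/
def Good (K : Set (ProbabilityMeasure X)) : Prop :=
  ∀ A B : Set X, IsClopen A → IsClopen B → (∀ μ ∈ K, μ A < μ B) →
    ∃ C : Set X, IsClopen C ∧ C ⊆ B ∧ ∀ μ ∈ K, μ C = μ A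

/-- Approximate divisibility of a set of probability measures. -/
def ApproximatelyDivisible (K : Set (ProbabilityMeasure X)) : Prop :=
  ∀ A : Set X, IsClopen A → ∀ n : ℕ, 1 ≤ n → ∀ ε : ℝ, 0 < ε →
    ∃ B : Set X, IsClopen B ∧ B ⊆ A ∧
      ∀ μ ∈ K, (μ A : ℝ) - ε ≤ (n : ℝ) * (μ B : ℝ) ∧ (n : ℝ) * (μ B : ℝ) ≤ (μ A : ℝ)

/-- A probability measure has full support if every nonempty open set has positive measure. -/
def FullSupport (μ : ProbabilityMeasure X) : Prop :=
  ∀ U : Set X, IsOpen U → U.Nonempty → 0 < μ U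

/-- A probability measure is atomless if all singletons are null. -/
def Atomless (μ : ProbabilityMeasure X) : Prop :=
  ∀ x : X, μ {x} = 0

/-- Convexity of a set of probability measures (as a subset of the `ℝ≥0`-module of
finite measures). -/
def ProbConvex (K : Set (ProbabilityMeasure X)) : Prop :=
  Convex NNReal (ProbabilityMeasure.toFiniteMeasure '' K)

/-- The set of extreme points of a set of probability measures. -/
def ProbExtremePoints (K : Set (ProbabilityMeasure X)) : Set (ProbabilityMeasure X) :=
  ProbabilityMeasure.toFiniteMeasure ⁻¹'
    (Set.extremePoints NNReal (ProbabilityMeasure.toFiniteMeasure '' K))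

/-- A dynamical simplex: a nonempty compact convex set of atomless, fully supported
probability measures which is good and approximately divisible. -/
def DynamicalSimplex (K : Set (ProbabilityMeasure X)) : Prop :=
  K.Nonempty ∧ IsCompact K ∧ ProbConvex K ∧
    (∀ μ ∈ K, Atomless μ ∧ FullSupport μ) ∧ Good K ∧ ApproximatelyDivisible K

/-- Membership in the full group of `g`. -/
def InFullGroup (g h : X ≃ₜ X) : Prop :=
  ∀ x : X, ∃ n : ℤ, h x = (g.toEquiv ^ n) x

/-- Membership in the topological full group of `g`: `h` is given piecewise by powers of `g`
on a finite clopen partition of `X`. -/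
def InTopologicalFullGroup (g h : X ≃ₜ X) : Prop :=
  ∃ (k : ℕ) (A : Fin k → Set X) (n : Fin k → ℤ),
    (∀ i, IsClopen (A i)) ∧ (∀ x : X, ∃! i, x ∈ A i) ∧
    ∀ i, ∀ x ∈ A i, h x = (g.toEquiv ^ (n i)) x

/-- `g` preserves every measure in `K` (i.e. `g` belongs to the group `G`). -/
def PreservesAll (K : Set (ProbabilityMeasure X)) (g : X ≃ₜ X) : Prop :=
  ∀ μ ∈ K, Preserves g μ

/-- `g` is `K`-saturated: any two `K`-equivalent clopen sets are mapped one to the other by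
an element of the topological full group of `g`. -/
def KSaturated (K : Set (ProbabilityMeasure X)) (g : X ≃ₜ X) : Prop :=
  ∀ U V : Set X, IsClopen U → IsClopen V → (∀ μ ∈ K, μ U = μ V) →
    ∃ h : X ≃ₜ X, InTopologicalFullGroup g h ∧ h '' U = V

/-- The topology of uniform convergence on the homeomorphism group of a compact space
(the compact-open topology, induced from `C(X, X)`). -/
instance : TopologicalSpace (X ≃ₜ X) :=
  TopologicalSpace.induced (fun h : X ≃ₜ X => (h : C(X, X))) inferInstance

/-- A KR-partition for `K`: a finite family of columns, each column being a finite sequence of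
clopen sets which are all `K`-equivalent, the atoms of all columns forming a partition of `X`. -/
structure KRPartition (X : Type*) [TopologicalSpace X] [MeasurableSpace X]
    (K : Set (ProbabilityMeasure X)) where
  numCols : ℕ
  height : Fin numCols → ℕ
  atom : (i : Fin numCols) → Fin (height i + 1) → Set X
  clopen : ∀ i j, IsClopen (atom i j)
  equivK : ∀ i j j', ∀ μ ∈ K, μ (atom i j) = μ (atom i j')
  partition : ∀ x : X, ∃! p : (i : Fin numCols) × Fin (height i + 1), x ∈ atom p.1 p.2

/-- The base of a KR-partition: the union of the first atoms of the columns. -/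
def KRPartition.base {K : Set (ProbabilityMeasure X)} (T : KRPartition X K) : Set X :=
  ⋃ i, T.atom i 0

/-- The top of a KR-partition: the union of the last atoms of the columns. -/
def KRPartition.top {K : Set (ProbabilityMeasure X)} (T : KRPartition X K) : Set X :=
  ⋃ i, T.atom i (Fin.last _)

/-- `S` refines `T`: the base (resp. top) of `S` is contained in the base (resp. top) of `T`,
and every column of `S` is obtained by cutting and stacking columns of `T`. -/
def KRPartition.Refines {K : Set (ProbabilityMeasure X)} (S T : KRPartition X K) : Prop :=
  S.base ⊆ T.base ∧ S.top ⊆ T.top ∧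
  ∀ c : Fin S.numCols, ∃ (m : ℕ) (idx : Fin (m + 1) → Fin T.numCols)
    (piece : (k : Fin (m + 1)) → Fin (T.height (idx k) + 1) → Set X),
    (∀ k j, piece k j ⊆ T.atom (idx k) j) ∧
    (S.height c + 1 = ∑ k : Fin (m + 1), (T.height (idx k) + 1)) ∧
    ∀ (k : Fin (m + 1)) (j : Fin (T.height (idx k) + 1))
      (hlt : (∑ l ∈ Finset.Iio k, (T.height (idx l) + 1)) + (j : ℕ) < S.height c + 1),
      S.atom c ⟨(∑ l ∈ Finset.Iio k, (T.height (idx l) + 1)) + (j : ℕ), hlt⟩ = piece k j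

/-- A KR-partition is compatible with a clopen set `U` if `U` is a union of its atoms,
equivalently every atom is either contained in `U` or disjoint from it. -/
def KRPartition.Compatible {K : Set (ProbabilityMeasure X)} (S : KRPartition X K)
    (U : Set X) : Prop :=
  ∀ i j, S.atom i j ⊆ U ∨ Disjoint (S.atom i j) U

end DynSimplex

/-!
Preserving all `g`-invariant measures is a closed condition satisfied by the full group, which gives
one inclusion. For the other, it is enough to find, for an `h` preserving these measures and a
finite clopen partition of `X`, an element of the full group that agrees with `h` up to this
partition; that is, to match `h ⁻¹' C` with `C` along orbits for every clopen `C`.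

If every invariant measure gives less mass to a clopen set `A` than to a clopen set `B`, then `A`
can be moved into `B` along orbits: read the points of `A` as opening and those of `B` as closing
parentheses along each orbit, and send every opening parenthesis to the one that closes it. Were
some parenthesis never closed, a limit of empirical measures along the forward orbit would be an
invariant measure giving `B` at most the mass of `A`.

When `A` and `B` merely have equal masses, minimality allows one to assume that they have a common
point `p`. Going back and forth, one matches what lies outside smaller and smaller clopen
neighbourhoods of `p` in `A` and in `B`. Each step keeps a little mass near `p` unmatched, so that
the comparison above applies. In the limit only `p` is left, and it is sent to itself.
-/

namespace FullGroupClosure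

open Set Filter Topology Function MulAction
open scoped Pointwise

section Antitone

variable {α : Type*} {A : ℕ → Set α}

theorem pairwise_disjoint_sdiff_succ (hA : Antitone A) :
    Pairwise (Disjoint on fun n => A n \ A (n + 1)) :=
  (pairwise_disjoint_on _).2 fun _ _ hij =>
    disjoint_left.2 fun _ hi hj => hi.2 (hA (Nat.succ_le_of_lt hij) hj.1)

theorem iUnion_sdiff_succ (hA : Antitone A) : ⋃ n, A n \ A (n + 1) = A 0 \ ⋂ n, A n := by
  refine Subset.antisymm (iUnion_subset fun n => sdiff_subset_sdiff (hA n.zero_le)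
    (iInter_subset A (n + 1))) fun x hx => ?_
  by_contra h
  simp only [mem_iUnion, Set.mem_sdiff, not_exists, not_and, not_not] at h
  exact hx.2 (mem_iInter.2 fun n => Nat.rec hx.1 h n)

end Antitone

section PartialHomeomorph

variable {X Y : Type*} [TopologicalSpace X] [TopologicalSpace Y]

theorem exists_openPartialHomeomorph_of_injOn [Nonempty X] {f : X → Y} {A : Set X}
    (hf : IsLocalHomeomorphOn f A) (hA : IsOpen A) (hinj : InjOn f A) :
    ∃ e : OpenPartialHomeomorph X Y, e.source = A ∧ e.target = f '' A ∧ ⇑e = f := by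
  refine ⟨.ofContinuousOpenRestrict (hinj.toPartialEquiv f A) hf.continuousOn ?_ hA, rfl, rfl, rfl⟩
  refine IsOpenMap.of_nhds_le fun x => ?_
  have hmap : map f (𝓝 (x : X)) = 𝓝 (f x) := hf.map_nhds_eq x.2
  rw [← map_nhds_subtype_coe_eq_nhds x.2 (hA.mem_nhds x.2), map_map] at hmap
  exact hmap.ge

theorem exists_openPartialHomeomorph_iUnion [Nonempty X] [Nonempty Y] {ι : Type*}
    (e : ι → OpenPartialHomeomorph X Y) (hs : Pairwise (Disjoint on fun i => (e i).source))
    (ht : Pairwise (Disjoint on fun i => (e i).target)) :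
    ∃ f : OpenPartialHomeomorph X Y, f.source = ⋃ i, (e i).source ∧
      f.target = ⋃ i, (e i).target ∧ ∀ i, EqOn f (e i) (e i).source := by
  classical
  obtain ⟨f, hf⟩ : ∃ f : X → Y, ∀ i, EqOn f (e i) (e i).source := by
    refine ⟨fun x => if h : ∃ i, x ∈ (e i).source then e h.choose x else Classical.arbitrary Y,
      fun i x hx => ?_⟩
    have h : ∃ i, x ∈ (e i).source := ⟨i, hx⟩
    simp only [dif_pos h]
    rw [hs.eq (not_disjoint_iff.2 ⟨x, h.choose_spec, hx⟩)]
  have himage : f '' ⋃ i, (e i).source = ⋃ i, (e i).target := by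
    rw [image_iUnion]
    exact iUnion_congr fun i => by rw [(hf i).image_eq, (e i).image_source_eq_target]
  have hinj : InjOn f (⋃ i, (e i).source) := by
    simp only [InjOn, mem_iUnion]
    rintro x ⟨i, hx⟩ y ⟨j, hy⟩ hxy
    rw [hf i hx, hf j hy] at hxy
    obtain rfl := ht.eq (not_disjoint_iff.2 ⟨_, (e i).map_source hx, hxy ▸ (e j).map_source hy⟩)
    exact (e i).injOn hx hy hxy
  obtain ⟨f', hsource, htarget, rfl⟩ := exists_openPartialHomeomorph_of_injOn
    (.mk f _ fun x hx => (mem_iUnion.1 hx).elim fun i hi => ⟨e i, hi, hf i⟩)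
    (isOpen_iUnion fun i => (e i).open_source) hinj
  exact ⟨f', hsource, htarget.trans himage, hf⟩

theorem continuousOn_update_of_isCompact [T2Space X] [DecidableEq X]
    {e : OpenPartialHomeomorph X Y} {A : Set X} {B : Set Y} {p : X} {q : Y}
    (hsource : e.source = A \ {p}) (htarget : e.target = B \ {q}) (hB : IsCompact B) :
    ContinuousOn (update e p q) A := by
  have hcont : ContinuousOn e (A \ {p}) := hsource ▸ e.continuousOn
  rw [continuousOn_update_iff]
  refine ⟨hcont, fun _ => ?_⟩
  rw [tendsto_nhds]
  intro V hV hq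
  have hBV : B \ V ⊆ e.target := fun y hy =>
    htarget ▸ ⟨hy.1, fun h => hy.2 (mem_singleton_iff.1 h ▸ hq)⟩
  have hclosed : IsClosed (e.symm '' (B \ V)) :=
    ((hB.diff hV).image_of_continuousOn (e.continuousOn_symm.mono hBV)).isClosed
  have hp : p ∉ e.symm '' (B \ V) := by
    rintro ⟨y, hy, rfl⟩
    exact (hsource ▸ e.map_target (hBV hy)).2 rfl
  filter_upwards [mem_nhdsWithin_of_mem_nhds (hclosed.isOpen_compl.mem_nhds hp),
    self_mem_nhdsWithin] with x hxV hxA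
  rw [← hsource] at hxA
  by_contra hx
  have hmem := htarget ▸ e.map_source hxA
  exact hxV ⟨e x, ⟨hmem.1, hx⟩, e.left_inv hxA⟩

theorem exists_openPartialHomeomorph_of_sdiff_singleton [T2Space X] [T2Space Y]
    {e : OpenPartialHomeomorph X Y} {A : Set X} {B : Set Y} {p : X} {q : Y}
    (hsource : e.source = A \ {p}) (htarget : e.target = B \ {q}) (hA : IsCompact A)
    (hB : IsCompact B) (hAo : IsOpen A) (hBo : IsOpen B) (hp : p ∈ A) (hq : q ∈ B) :
    ∃ f : OpenPartialHomeomorph X Y, f.source = A ∧ f.target = B ∧ f p = q ∧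
      EqOn f e (A \ {p}) := by
  classical
  have he : ∀ x ∈ A, x ≠ p → x ∈ e.source := fun x hx hxp => hsource ▸ ⟨hx, hxp⟩
  have he' : ∀ y ∈ B, y ≠ q → y ∈ e.target := fun y hy hyq => htarget ▸ ⟨hy, hyq⟩
  have hmaps : ∀ x ∈ e.source, e x ∈ B ∧ e x ≠ q := fun x hx => by
    simpa [htarget] using e.map_source hx
  have hmaps' : ∀ y ∈ e.target, e.symm y ∈ A ∧ e.symm y ≠ p := fun y hy => by
    simpa [hsource] using e.map_target hy
  let f : OpenPartialHomeomorph X Y :=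
    { toFun := update e p q
      invFun := update e.symm q p
      source := A
      target := B
      map_source' x hx := by
        by_cases hxp : x = p
        · simpa [hxp] using hq
        · simpa [hxp] using (hmaps x (he x hx hxp)).1
      map_target' y hy := by
        by_cases hyq : y = q
        · simpa [hyq] using hp
        · simpa [hyq] using (hmaps' y (he' y hy hyq)).1
      left_inv' x hx := by
        by_cases hxp : x = p
        · simp [hxp]
        · simp [hxp, (hmaps x (he x hx hxp)).2, e.left_inv (he x hx hxp)]
      right_inv' y hy := by
        by_cases hyq : y = q
        · simp [hyq]
        · simp [hyq, (hmaps' y (he' y hy hyq)).2, e.right_inv (he' y hy hyq)]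
      continuousOn_toFun := continuousOn_update_of_isCompact hsource htarget hB
      continuousOn_invFun := continuousOn_update_of_isCompact (e := e.symm) htarget hsource hA
      open_source := hAo
      open_target := hBo }
  have hf : ⇑f = update e p q := rfl
  exact ⟨f, rfl, rfl, by rw [hf, update_self], fun x hx => by rw [hf, update_of_ne hx.2]⟩

end PartialHomeomorph

/-- `OrbitHomeomorphic G A B` says that the open sets `A` and `B` are equivalent under the
pseudogroup of the orbit equivalence relation of `G`: some homeomorphism from `A` onto `B` moves
every point inside its `G`-orbit. -/
def OrbitHomeomorphic (G : Type*) {X : Type*} [Group G] [MulAction G X] [TopologicalSpace X]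
    (A B : Set X) : Prop :=
  ∃ e : OpenPartialHomeomorph X X, e.source = A ∧ e.target = B ∧ ∀ x ∈ A, e x ∈ orbit G x

namespace OrbitHomeomorphic

variable {G X : Type*} [Group G] [MulAction G X] [TopologicalSpace X] {A B C : Set X}

theorem image (f : X ≃ₜ X) (hf : ∀ x ∈ A, f x ∈ orbit G x) (hA : IsOpen A) :
    OrbitHomeomorphic G A (f '' A) :=
  ⟨f.toOpenPartialHomeomorphOfImageEq A hA _ rfl, rfl, rfl, hf⟩

theorem smul [ContinuousConstSMul G X] (γ : G) (hA : IsOpen A) :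
    OrbitHomeomorphic G A (γ • A) :=
  image (Homeomorph.smul γ) (fun x _ => mem_orbit x γ) hA

@[symm]
theorem symm (h : OrbitHomeomorphic G A B) : OrbitHomeomorphic G B A := by
  obtain ⟨e, rfl, rfl, he⟩ := h
  refine ⟨e.symm, rfl, rfl, fun y hy => ?_⟩
  have := he _ (e.map_target hy)
  rwa [e.right_inv hy, mem_orbit_symm] at this

@[trans]
theorem trans (h : OrbitHomeomorphic G A B) (h' : OrbitHomeomorphic G B C) :
    OrbitHomeomorphic G A C := by
  obtain ⟨e, rfl, rfl, he⟩ := h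
  obtain ⟨e', hsource, rfl, he'⟩ := h'
  refine ⟨e.trans' e' hsource.symm, rfl, rfl, fun x hx => ?_⟩
  rw [← orbit_eq_iff.2 (he x hx)]
  exact he' _ (e.map_source hx)

theorem iUnion [Nonempty X] {ι : Type*} {A B : ι → Set X}
    (h : ∀ i, OrbitHomeomorphic G (A i) (B i)) (hA : Pairwise (Disjoint on A))
    (hB : Pairwise (Disjoint on B)) : OrbitHomeomorphic G (⋃ i, A i) (⋃ i, B i) := by
  choose e hsource htarget he using h
  obtain rfl : (fun i => (e i).source) = A := funext hsource
  obtain rfl : (fun i => (e i).target) = B := funext htarget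
  obtain ⟨f, hfs, hft, hf⟩ := exists_openPartialHomeomorph_iUnion e hA hB
  refine ⟨f, hfs, hft, fun x hx => ?_⟩
  obtain ⟨i, hi⟩ := mem_iUnion.1 hx
  exact hf i hi ▸ he i x hi

theorem union [Nonempty X] {A' B' : Set X} (h : OrbitHomeomorphic G A B)
    (h' : OrbitHomeomorphic G A' B') (hA : Disjoint A A') (hB : Disjoint B B') :
    OrbitHomeomorphic G (A ∪ A') (B ∪ B') := by
  rw [union_eq_iUnion, union_eq_iUnion]
  exact iUnion (Bool.forall_bool.2 ⟨h', h⟩) (pairwise_disjoint_on_bool.2 hA)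
    (pairwise_disjoint_on_bool.2 hB)

theorem of_sdiff_singleton [T2Space X] {p q : X}
    (h : OrbitHomeomorphic G (A \ {p}) (B \ {q})) (hA : IsCompact A) (hB : IsCompact B)
    (hAo : IsOpen A) (hBo : IsOpen B) (hp : p ∈ A) (hq : q ∈ B) (hpq : q ∈ orbit G p) :
    OrbitHomeomorphic G A B := by
  obtain ⟨e, hsource, htarget, he⟩ := h
  obtain ⟨f, hfs, hft, hfp, hf⟩ :=
    exists_openPartialHomeomorph_of_sdiff_singleton hsource htarget hA hB hAo hBo hp hq
  refine ⟨f, hfs, hft, fun x hx => ?_⟩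
  by_cases hxp : x = p
  · rwa [hxp, hfp]
  · exact hf ⟨hx, hxp⟩ ▸ he x ⟨hx, hxp⟩

theorem isOpen_right (h : OrbitHomeomorphic G A B) : IsOpen B := by
  obtain ⟨e, -, rfl, -⟩ := h
  exact e.open_target

theorem isCompact_right (h : OrbitHomeomorphic G A B) (hA : IsCompact A) : IsCompact B := by
  obtain ⟨e, rfl, rfl, -⟩ := h
  exact e.image_source_eq_target ▸ hA.image_of_continuousOn e.continuousOn

end OrbitHomeomorphic

section InvariantMeasure

variable {G X : Type*} [Group G] [MulAction G X] [MeasurableSpace X]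

theorem measure_image_le_of_mem_orbit [Countable G] (μ : Measure X)
    [SMulInvariantMeasure G X μ] {f : X → X} {A : Set X} (hf : ∀ x ∈ A, f x ∈ orbit G x)
    (hmeas : ∀ γ : G, MeasurableSet {x ∈ A | f x = γ • x}) : μ (f '' A) ≤ μ A := by
  obtain ⟨u, hu⟩ := exists_surjective_nat G
  let P : ℕ → Set X := disjointed fun n => {x ∈ A | f x = u n • x}
  have hP : ∀ n, ∀ x ∈ P n, f x = u n • x := fun n x hx => (disjointed_subset _ n hx).2
  have hAP : A = ⋃ n, P n := by
    rw [iUnion_disjointed]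
    refine Subset.antisymm (fun x hx => ?_) (iUnion_subset fun n => sep_subset _ _)
    obtain ⟨γ, hγ⟩ := hf x hx
    obtain ⟨n, rfl⟩ := hu γ
    exact mem_iUnion.2 ⟨n, hx, hγ.symm⟩
  calc μ (f '' A) = μ (⋃ n, f '' P n) := by rw [← image_iUnion, ← hAP]
    _ = μ (⋃ n, u n • P n) := by
      congr 1 with y
      simp_rw [mem_iUnion, ← image_smul, image_congr (hP _)]
    _ ≤ ∑' n, μ (u n • P n) := measure_iUnion_le _
    _ = ∑' n, μ (P n) := by simp_rw [measure_smul]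
    _ = μ A := by
      rw [hAP, measure_iUnion (disjoint_disjointed _) (.disjointed fun n => hmeas (u n))]

variable [TopologicalSpace X] [BorelSpace X] [ContinuousConstSMul G X] [T2Space X] [Countable G]
  {A B : Set X}

theorem OrbitHomeomorphic.measure_le (h : OrbitHomeomorphic G A B) (μ : Measure X)
    [SMulInvariantMeasure G X μ] : μ B ≤ μ A := by
  obtain ⟨e, rfl, rfl, he⟩ := h
  rw [← e.image_source_eq_target]
  refine measure_image_le_of_mem_orbit μ he fun γ => ?_
  have hcont : ContinuousOn (fun x => (e x, γ • x)) e.source :=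
    e.continuousOn.prodMk (continuous_const_smul γ).continuousOn
  have hdiff : {x ∈ e.source | e x = γ • x} =
      e.source \ (e.source ∩ (fun x => (e x, γ • x)) ⁻¹' (diagonal X)ᶜ) := by
    rw [sdiff_self_inter, preimage_compl, sdiff_compl]
    rfl
  rw [hdiff]
  exact e.open_source.measurableSet.diff
    (hcont.isOpen_inter_preimage e.open_source isClosed_diagonal.isOpen_compl).measurableSet

theorem OrbitHomeomorphic.measure_eq (h : OrbitHomeomorphic G A B) (μ : Measure X)
    [SMulInvariantMeasure G X μ] : μ A = μ B :=
  (h.symm.measure_le μ).antisymm (h.measure_le μ)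

end InvariantMeasure

theorem measure_ext_of_isClopen {X : Type*} [TopologicalSpace X] [MeasurableSpace X] [BorelSpace X]
    [CompactSpace X] [TopologicalSpace.MetrizableSpace X] [TotallyDisconnectedSpace X]
    {μ ν : Measure X} [IsFiniteMeasure μ] (h : ∀ C, IsClopen C → μ C = ν C) : μ = ν := by
  let _ := TopologicalSpace.metrizableSpaceMetric X
  refine ext_of_generate_finite {s | IsClopen s} ?_ (fun s hs t ht _ => hs.inter ht) h
    (h univ isClopen_univ)
  rw [BorelSpace.measurable_eq (α := X)]
  exact isTopologicalBasis_isClopen.borel_eq_generateFrom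

section SameMeasure

variable (G : Type*) {X : Type*} [Group G] [MulAction G X] [MeasurableSpace X]

/-- `SameMeasure G A B` says that the sets `A` and `B` cannot be distinguished by the
`G`-invariant Borel probability measures. -/
def SameMeasure (A B : Set X) : Prop :=
  ∀ (μ : Measure X) [IsProbabilityMeasure μ] [SMulInvariantMeasure G X μ], μ.real A = μ.real B

variable {G} {A B C A' B' : Set X}

theorem SameMeasure.symm (h : SameMeasure G A B) : SameMeasure G B A :=
  fun μ _ _ => (h μ).symm

theorem SameMeasure.trans (h : SameMeasure G A B) (h' : SameMeasure G B C) :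
    SameMeasure G A C :=
  fun μ _ _ => (h μ).trans (h' μ)

theorem SameMeasure.sdiff (h : SameMeasure G A B) (h' : SameMeasure G A' B')
    (hA : A' ⊆ A) (hB : B' ⊆ B) (hA' : MeasurableSet A') (hB' : MeasurableSet B') :
    SameMeasure G (A \ A') (B \ B') :=
  fun μ _ _ => by rw [measureReal_sdiff hA hA', measureReal_sdiff hB hB', h μ, h' μ]

theorem SameMeasure.real_sdiff_lt_real_sdiff {μ : Measure X} [IsProbabilityMeasure μ]
    [SMulInvariantMeasure G X μ] {D V : Set X} (h : SameMeasure G A B) (hDV : D ⊆ V)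
    (hVA : V ⊆ A) (hVB : V ⊆ B) (hD : MeasurableSet D) (hV : MeasurableSet V)
    (hpos : 0 < μ (V \ D)) : μ.real (A \ V) < μ.real (B \ D) := by
  have hpos' : 0 < μ.real (V \ D) := ENNReal.toReal_pos hpos.ne' (measure_ne_top _ _)
  rw [measureReal_sdiff hDV hD] at hpos'
  rw [measureReal_sdiff hVA hV, measureReal_sdiff (hDV.trans hVB) hD, h μ]
  linarith

theorem sameMeasure_smul (γ : G) (A : Set X) : SameMeasure G A (γ • A) :=
  fun μ _ _ => by rw [measureReal_def, measureReal_def, measure_smul]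

end SameMeasure

section Comparison

variable (G X : Type*) [Group G] [MulAction G X] [TopologicalSpace X] [MeasurableSpace X]

/-- Dynamical comparison of clopen sets: if every `G`-invariant Borel probability measure gives
less mass to `A` than to `B`, then `A` can be moved into `B` along the orbits of `G`. -/
def DynamicalComparison : Prop :=
  ∀ A B : Set X, IsClopen A → IsClopen B →
    (∀ (μ : Measure X) [IsProbabilityMeasure μ] [SMulInvariantMeasure G X μ],
      μ.real A < μ.real B) →
    ∃ C ⊆ B, OrbitHomeomorphic G A C

variable {X} in
/-- The situation preserved by the back-and-forth construction around `p`: clopen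
neighbourhoods `A` and `B` of `p` with the same mass for all `G`-invariant probability measures. -/
structure BalancedAt (p : X) (A B : Set X) : Prop where
  isClopen_left : IsClopen A
  isClopen_right : IsClopen B
  mem_left : p ∈ A
  mem_right : p ∈ B
  sameMeasure : SameMeasure G A B

variable {G X} {p : X} {A B U : Set X}

theorem BalancedAt.symm (h : BalancedAt G p A B) : BalancedAt G p B A :=
  ⟨h.isClopen_right, h.isClopen_left, h.mem_right, h.mem_left, h.sameMeasure.symm⟩

theorem OrbitHomeomorphic.sameMeasure [BorelSpace X] [ContinuousConstSMul G X] [T2Space X]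
    [Countable G] (h : OrbitHomeomorphic G A B) : SameMeasure G A B :=
  fun μ _ _ => congrArg ENNReal.toReal (h.measure_eq μ)

variable [BorelSpace X] [ContinuousConstSMul G X] [CompactSpace X] [T2Space X]
  [TotallyDisconnectedSpace X] [Countable G] [MulAction.IsMinimal G X] [PerfectSpace X]

-- A proper clopen subset `D ∋ p` of the part `V` of `A` that stays behind is kept free in `B`:
-- this makes the mass inequality strict and ensures that `p` is left over on both sides.
theorem BalancedAt.exists_subset_left (hcomp : DynamicalComparison G X)
    (h : BalancedAt G p A B) (hU : U ∈ 𝓝 p) :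
    ∃ A' ⊆ A ∩ U, ∃ B' ⊆ B, BalancedAt G p A' B' ∧
      OrbitHomeomorphic G (A \ A') (B \ B') := by
  obtain ⟨hA, hB, hpA, hpB, hAB⟩ := h
  obtain ⟨V, ⟨hpV, hV⟩, hVsub⟩ := (nhds_basis_clopen p).mem_iff.1 <|
    inter_mem (inter_mem (hA.isOpen.mem_nhds hpA) (hB.isOpen.mem_nhds hpB)) hU
  have hVA : V ⊆ A := fun x hx => (hVsub hx).1.1
  have hVB : V ⊆ B := fun x hx => (hVsub hx).1.2
  obtain ⟨q, hqV, hqp⟩ : ∃ q ∈ V, q ≠ p := by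
    exact nonempty_of_mem (inter_mem (mem_nhdsWithin_of_mem_nhds (hV.isOpen.mem_nhds hpV))
      (self_mem_nhdsWithin : {p}ᶜ ∈ 𝓝[≠] p))
  obtain ⟨D, ⟨hpD, hD⟩, hDsub⟩ := (nhds_basis_clopen p).mem_iff.1 <|
    inter_mem (hV.isOpen.mem_nhds hpV) (isOpen_ne.mem_nhds hqp.symm)
  have hDV : D ⊆ V := fun x hx => (hDsub hx).1
  obtain ⟨C, hCsub, hAC⟩ := hcomp (A \ V) (B \ D) (hA.diff hV) (hB.diff hD) fun μ _ _ =>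
    hAB.real_sdiff_lt_real_sdiff hDV hVA hVB hD.isOpen.measurableSet hV.isOpen.measurableSet <|
      measure_isOpen_pos_of_smulInvariant_of_compact_ne_zero G isCompact_univ
        (by simp) (hV.diff hD).isOpen ⟨q, hqV, fun hq => (hDsub hq).2 rfl⟩
  have hC : IsClopen C :=
    ⟨(hAC.isCompact_right (hA.diff hV).isClosed.isCompact).isClosed, hAC.isOpen_right⟩
  have hCB : C ⊆ B := hCsub.trans sdiff_subset
  have hAV : A \ (A \ V) = V := sdiff_sdiff_cancel_left hVA
  refine ⟨V, fun x hx => ⟨hVA hx, (hVsub hx).2⟩, B \ C, sdiff_subset,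
    ⟨hV, hB.diff hC, hpV, ⟨hpB, fun hp => (hCsub hp).2 hpD⟩, ?_⟩, ?_⟩
  · simpa only [hAV] using hAB.sdiff hAC.sameMeasure sdiff_subset hCB
      (hA.diff hV).isOpen.measurableSet hC.isOpen.measurableSet
  · rwa [sdiff_sdiff_cancel_left hCB]

theorem BalancedAt.exists_subset (hcomp : DynamicalComparison G X)
    (h : BalancedAt G p A B) (hU : U ∈ 𝓝 p) :
    ∃ A' ⊆ A ∩ U, ∃ B' ⊆ B ∩ U, BalancedAt G p A' B' ∧
      OrbitHomeomorphic G (A \ A') (B \ B') := by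
  obtain ⟨A₁, hA₁, B₁, hB₁, h₁, e₁⟩ := h.exists_subset_left hcomp hU
  obtain ⟨B₂, hB₂, A₂, hA₂, h₂, e₂⟩ := h₁.symm.exists_subset_left hcomp hU
  rw [subset_inter_iff] at hA₁ hB₂
  refine ⟨A₂, hA₂.trans (subset_inter hA₁.1 hA₁.2), B₂,
    subset_inter (hB₂.1.trans hB₁) hB₂.2, h₂.symm, ?_⟩
  have := Nonempty.intro p
  have e := e₁.union e₂.symm (disjoint_sdiff_left.mono_right sdiff_subset)
    (disjoint_sdiff_left.mono_right sdiff_subset)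
  rwa [sdiff_union_sdiff_cancel hA₁.1 hA₂, sdiff_union_sdiff_cancel hB₁ hB₂.1] at e

theorem BalancedAt.exists_seq (hcomp : DynamicalComparison G X) (h : BalancedAt G p A B)
    {U : ℕ → Set X} (hU : ∀ n, U n ∈ 𝓝 p) :
    ∃ A' B' : ℕ → Set X, A' 0 = A ∧ B' 0 = B ∧ (∀ n, BalancedAt G p (A' n) (B' n)) ∧
      ∀ n, A' (n + 1) ⊆ A' n ∩ U n ∧ B' (n + 1) ⊆ B' n ∩ U n ∧
        OrbitHomeomorphic G (A' n \ A' (n + 1)) (B' n \ B' (n + 1)) := by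
  have hstep : ∀ (n : ℕ) (S : {S : Set X × Set X // BalancedAt G p S.1 S.2}),
      ∃ T : {T : Set X × Set X // BalancedAt G p T.1 T.2}, T.1.1 ⊆ S.1.1 ∩ U n ∧
        T.1.2 ⊆ S.1.2 ∩ U n ∧ OrbitHomeomorphic G (S.1.1 \ T.1.1) (S.1.2 \ T.1.2) := by
    rintro n ⟨⟨S₁, S₂⟩, hS⟩
    obtain ⟨T₁, hT₁, T₂, hT₂, hT, e⟩ := hS.exists_subset hcomp (hU n)
    exact ⟨⟨⟨T₁, T₂⟩, hT⟩, hT₁, hT₂, e⟩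
  choose next hnext using hstep
  let s : ℕ → {S : Set X × Set X // BalancedAt G p S.1 S.2} :=
    fun n => Nat.rec ⟨⟨A, B⟩, h⟩ next n
  exact ⟨fun n => (s n).1.1, fun n => (s n).1.2, rfl, rfl, fun n => (s n).2,
    fun n => hnext n (s n)⟩

theorem BalancedAt.orbitHomeomorphic_sdiff_singleton [FirstCountableTopology X]
    (hcomp : DynamicalComparison G X) (h : BalancedAt G p A B) :
    OrbitHomeomorphic G (A \ {p}) (B \ {p}) := by
  obtain ⟨U, hU⟩ := (𝓝 p).exists_antitone_basis
  obtain ⟨A', B', rfl, rfl, hbal, hsucc⟩ := h.exists_seq hcomp fun n => hU.mem n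
  have hA : Antitone A' := antitone_nat_of_succ_le fun n => (subset_inter_iff.1 (hsucc n).1).1
  have hB : Antitone B' := antitone_nat_of_succ_le fun n => (subset_inter_iff.1 (hsucc n).2.1).1
  have hiInter : ∀ S : ℕ → Set X, (∀ n, p ∈ S n) → (∀ n, S (n + 1) ⊆ U n) →
      ⋂ n, S n = {p} := fun S hp hS =>
    Subset.antisymm (biInter_basis_nhds hU.toHasBasis ▸
      subset_iInter₂ fun n _ => (iInter_subset _ (n + 1)).trans (hS n))
      (singleton_subset_iff.2 (mem_iInter.2 hp))
  have := Nonempty.intro p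
  have e := OrbitHomeomorphic.iUnion (fun n => (hsucc n).2.2) (pairwise_disjoint_sdiff_succ hA)
    (pairwise_disjoint_sdiff_succ hB)
  rwa [iUnion_sdiff_succ hA, iUnion_sdiff_succ hB,
    hiInter A' (fun n => (hbal n).mem_left) fun n => (subset_inter_iff.1 (hsucc n).1).2,
    hiInter B' (fun n => (hbal n).mem_right) fun n => (subset_inter_iff.1 (hsucc n).2.1).2] at e

theorem BalancedAt.orbitHomeomorphic [FirstCountableTopology X]
    (hcomp : DynamicalComparison G X) (h : BalancedAt G p A B) : OrbitHomeomorphic G A B :=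
  (h.orbitHomeomorphic_sdiff_singleton hcomp).of_sdiff_singleton
    h.isClopen_left.isClosed.isCompact h.isClopen_right.isClosed.isCompact
    h.isClopen_left.isOpen h.isClopen_right.isOpen h.mem_left h.mem_right (mem_orbit_self p)

theorem orbitHomeomorphic_of_sameMeasure [FirstCountableTopology X]
    (hcomp : DynamicalComparison G X) (hA : IsClopen A) (hB : IsClopen B)
    (hAne : A.Nonempty) (hBne : B.Nonempty) (hAB : SameMeasure G A B) :
    OrbitHomeomorphic G A B := by
  obtain ⟨p, hpA⟩ := hAne
  obtain ⟨γ, hγ⟩ := hB.isOpen.exists_smul_mem G p hBne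
  have hbal : BalancedAt G p A (γ⁻¹ • B) :=
    ⟨hA, ⟨hB.isClosed.smul γ⁻¹, hB.isOpen.smul γ⁻¹⟩, hpA, mem_inv_smul_set_iff.2 hγ,
      hAB.trans (sameMeasure_smul γ⁻¹ B)⟩
  exact (hbal.orbitHomeomorphic hcomp).trans (.symm (.smul γ⁻¹ hB.isOpen))

end Comparison

section Closure

theorem isClosed_setOf_map_eq {X Y : Type*} [TopologicalSpace X] [CompactSpace X]
    [MeasurableSpace X] [OpensMeasurableSpace X] [PseudoMetricSpace Y] [MeasurableSpace Y]
    [BorelSpace Y] (μ : Measure X) [IsFiniteMeasure μ] (ν : Measure Y) [IsFiniteMeasure ν] :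
    IsClosed {f : C(X, Y) | μ.map f = ν} := by
  have hset : {f : C(X, Y) | μ.map f = ν} =
      ⋂ φ : BoundedContinuousFunction Y ℝ, {f | ∫ x, φ (f x) ∂μ = ∫ y, φ y ∂ν} := by
    ext f
    have hint : ∀ φ : BoundedContinuousFunction Y ℝ, ∫ y, φ y ∂μ.map f = ∫ x, φ (f x) ∂μ :=
      fun φ => integral_map f.continuous.aemeasurable φ.continuous.aestronglyMeasurable
    rw [mem_iInter]
    exact ⟨fun hf φ => (hint φ).symm.trans (hf ▸ rfl),
      fun hf => ext_of_forall_integral_eq_of_IsFiniteMeasure fun φ => (hint φ).trans (hf φ)⟩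
  rw [hset]
  refine isClosed_iInter fun φ => isClosed_eq ?_ continuous_const
  exact continuous_of_dominated (bound := fun _ => ‖φ‖)
    (fun f => (φ.continuous.comp f.continuous).aestronglyMeasurable)
    (fun f => .of_forall fun x => φ.norm_coe_le_norm (f x)) (integrable_const _)
    (.of_forall fun x => φ.continuous.comp (continuous_eval_const x))

variable {G X : Type*} [Group G] [MulAction G X] [TopologicalSpace X] [MeasurableSpace X]
  [BorelSpace X] [ContinuousConstSMul G X] [CompactSpace X]
  [TopologicalSpace.MetrizableSpace X] [TotallyDisconnectedSpace X] [Countable G]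

theorem map_eq_of_forall_mem_orbit {f : X ≃ₜ X} (hf : ∀ x, f x ∈ orbit G x) (μ : Measure X)
    [IsFiniteMeasure μ] [SMulInvariantMeasure G X μ] : μ.map f = μ := by
  refine measure_ext_of_isClopen fun C hC => ?_
  have h := OrbitHomeomorphic.image f (fun x (_ : x ∈ f ⁻¹' C) => hf x)
    (hC.isOpen.preimage f.continuous)
  rw [Measure.map_apply f.continuous.measurable hC.isOpen.measurableSet, h.measure_eq μ,
    f.image_preimage]

variable [MulAction.IsMinimal G X] [PerfectSpace X] [Nonempty X]

theorem exists_homeomorph_mem_orbit_of_continuous (hcomp : DynamicalComparison G X) {h : X ≃ₜ X}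
    (hh : ∀ C, IsClopen C → SameMeasure G (h ⁻¹' C) C) {ι : Type*} [TopologicalSpace ι]
    [DiscreteTopology ι] {q : X → ι} (hq : Continuous q) :
    ∃ f : X ≃ₜ X, (∀ x, f x ∈ orbit G x) ∧ ∀ x, q (f x) = q (h x) := by
  have hclopen : ∀ i, IsClopen (q ⁻¹' {i}) := fun i => (isClopen_discrete {i}).preimage hq
  have hfibre : ∀ i : range q, OrbitHomeomorphic G (h ⁻¹' (q ⁻¹' {i.1})) (q ⁻¹' {i.1}) := by
    rintro ⟨_, y, rfl⟩
    exact orbitHomeomorphic_of_sameMeasure hcomp ((hclopen _).preimage h.continuous) (hclopen _)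
      ⟨h.symm y, congrArg q (h.apply_symm_apply y)⟩ ⟨y, rfl⟩ (hh _ (hclopen _))
  choose e hsource htarget he using hfibre
  have hdisj : Pairwise (Disjoint on fun i : range q => q ⁻¹' {i.1}) := fun i j hij =>
    (disjoint_singleton.2 (Subtype.coe_injective.ne hij)).preimage q
  obtain ⟨f, hfs, hft, hf⟩ := exists_openPartialHomeomorph_iUnion e
    (fun i j hij => by simpa only [onFun, hsource] using (hdisj hij).preimage h)
    (by simpa only [htarget] using hdisj)
  have hf' : ∀ x, f x = e ⟨q (h x), mem_range_self _⟩ x := fun x => hf _ (hsource _ ▸ rfl)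
  have hunion : ⋃ i : range q, q ⁻¹' {i.1} = univ :=
    iUnion_eq_univ_iff.2 fun x => ⟨⟨q x, mem_range_self x⟩, rfl⟩
  have hfs' : f.source = univ := by
    simp_rw [hfs, hsource]
    rw [← preimage_iUnion, hunion, preimage_univ]
  have hft' : f.target = univ := by simp_rw [hft, htarget, hunion]
  refine ⟨f.toHomeomorphOfSourceEqUnivTargetEqUniv hfs' hft',
    fun x => mem_of_eq_of_mem (hf' x) (he _ x rfl), fun x => ?_⟩
  have hx := (e ⟨q (h x), mem_range_self _⟩).map_source (hsource _ ▸ rfl : x ∈ _)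
  rw [htarget] at hx
  exact (congrArg q (hf' x)).trans hx

theorem closure_setOf_forall_mem_orbit_eq (hcomp : DynamicalComparison G X) :
    closure {h : X ≃ₜ X | ∀ x, h x ∈ orbit G x} =
      {h : X ≃ₜ X | ∀ (μ : Measure X) [IsProbabilityMeasure μ] [SMulInvariantMeasure G X μ],
        μ.map h = μ} := by
  let _ := TopologicalSpace.metrizableSpaceMetric X
  refine Subset.antisymm (closure_minimal (fun h hh μ _ _ => map_eq_of_forall_mem_orbit hh μ) ?_)
    fun h hh => ?_
  · simp only [ofPred_forall]
    exact isClosed_iInter fun μ => isClosed_iInter fun _ => isClosed_iInter fun _ =>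
      (isClosed_setOf_map_eq μ μ).preimage
        (continuous_induced_dom (f := fun h : X ≃ₜ X => (h : C(X, X))))
  rw [closure_induced, Metric.mem_closure_iff]
  intro ε hε
  obtain ⟨n, q, c, hq, hqc⟩ := ContinuousMap.exists_finite_approximation_of_mem_nhds_diagonal
    (.id X) (nhdsSet_diagonal_le_uniformity (Metric.dist_mem_uniformity (half_pos hε)))
  have hh' : ∀ C, IsClopen C → SameMeasure G (h ⁻¹' C) C := fun C hC μ _ _ => by
    rw [← map_measureReal_apply h.continuous.measurable hC.isOpen.measurableSet, hh μ]
  obtain ⟨f, hf, hqf⟩ := exists_homeomorph_mem_orbit_of_continuous hcomp hh' hq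
  refine ⟨f, mem_image_of_mem _ hf, (ContinuousMap.dist_lt_iff hε).2 fun x => ?_⟩
  calc dist (h x) (f x) ≤ dist (h x) (c (q (h x))) + dist (f x) (c (q (f x))) := by
        rw [hqf]
        exact dist_triangle_right _ _ _
    _ < ε := by
        rw [← add_halves ε]
        exact add_lt_add (hqc (h x)) (hqc (f x))

end Closure

section KrylovBogoliubov

variable {X : Type*} [MeasurableSpace X]

/-- The uniform probability measure on the orbit segment `x, T x, …, T^[n] x`, counted with
multiplicity. The segment has `n + 1` points, so that it is never empty. -/
noncomputable def empiricalMeasure (T : X → X) (x : X) (n : ℕ) : ProbabilityMeasure X :=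
  ⟨((n + 1 : ℕ) : ENNReal)⁻¹ • ∑ i ∈ Finset.range (n + 1), Measure.dirac (T^[i] x), ⟨by
    simp [ENNReal.inv_mul_cancel]⟩⟩

theorem integral_empiricalMeasure [MeasurableSingletonClass X] (T : X → X) (x : X) (n : ℕ)
    (f : X → ℝ) : ∫ y, f y ∂(empiricalMeasure T x n : Measure X) =
      birkhoffAverage ℝ T f (n + 1) x := by
  rw [empiricalMeasure, ProbabilityMeasure.coe_mk, integral_smul_measure,
    integral_finsetSum_measure fun i _ => integrable_dirac enorm_lt_top, ENNReal.toReal_inv,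
    ENNReal.toReal_natCast]
  simp only [integral_dirac, birkhoffAverage, birkhoffSum]

variable [TopologicalSpace X] [CompactSpace X] [TopologicalSpace.MetrizableSpace X]
  [BorelSpace X] {T : X → X}

theorem exists_measurePreserving_tendsto_birkhoffAverage (hT : Continuous T) (x : X) :
    ∃ (μ : Measure X) (F : Filter ℕ), IsProbabilityMeasure μ ∧ MeasurePreserving T μ μ ∧
      F.NeBot ∧ ∀ f : C(X, ℝ),
        Tendsto (fun n => birkhoffAverage ℝ T f n x) F (𝓝 (∫ y, f y ∂μ)) := by
  let _ := TopologicalSpace.metrizableSpaceMetric X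
  let F : Ultrafilter ℕ := hyperfilter ℕ
  have hF : map (· + 1) (F : Filter ℕ) ≤ atTop :=
    (tendsto_add_atTop_nat 1).mono_left Nat.hyperfilter_le_atTop
  let ν := (F.map (empiricalMeasure T x)).lim
  have hν : Tendsto (empiricalMeasure T x) F (𝓝 ν) := (F.map (empiricalMeasure T x)).le_nhds_lim
  have hlim : ∀ f : C(X, ℝ), Tendsto (fun n => birkhoffAverage ℝ T f n x) (map (· + 1) F)
      (𝓝 (∫ y, f y ∂(ν : Measure X))) := fun f => by
    rw [tendsto_map'_iff]
    exact (ProbabilityMeasure.tendsto_iff_forall_integral_tendsto.1 hν (.mkOfCompact f)).congr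
      fun n => integral_empiricalMeasure T x n f
  refine ⟨ν, map (· + 1) F, inferInstance, ⟨hT.measurable, ?_⟩, inferInstance, hlim⟩
  have := Measure.isProbabilityMeasure_map (μ := (ν : Measure X)) hT.aemeasurable
  refine ext_of_forall_integral_eq_of_IsFiniteMeasure fun φ => ?_
  rw [integral_map hT.aemeasurable φ.continuous.aestronglyMeasurable]
  have hshift := (tendsto_birkhoffAverage_apply_sub_birkhoffAverage' ℝ φ.isBounded_range T
    x).mono_left hF
  have hcomp : ∀ n, birkhoffAverage ℝ T φ n (T x) = birkhoffAverage ℝ T (φ ∘ T) n x := fun n => by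
    simp only [birkhoffAverage, birkhoffSum, comp_apply, ← iterate_succ_apply,
      ← iterate_succ_apply']
  simp only [hcomp] at hshift
  exact sub_eq_zero.1 <| tendsto_nhds_unique
    ((hlim (φ.toContinuousMap.comp ⟨T, hT⟩)).sub (hlim φ.toContinuousMap)) hshift

theorem exists_birkhoffSum_pos (hT : Continuous T) {φ : X → ℝ} (hφ : Continuous φ)
    (hpos : ∀ (μ : Measure X) [IsProbabilityMeasure μ], MeasurePreserving T μ μ →
      0 < ∫ y, φ y ∂μ) (x : X) : ∃ n, 0 < birkhoffSum T φ n x := by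
  obtain ⟨μ, F, _, hμ, _, hF⟩ := exists_measurePreserving_tendsto_birkhoffAverage hT x
  obtain ⟨n, hn⟩ := ((hF ⟨φ, hφ⟩).eventually_const_lt (hpos μ hμ)).exists
  exact ⟨n, pos_of_mul_pos_right hn (by positivity)⟩

end KrylovBogoliubov

section Matching

variable {X : Type*} {T : X → X} {c : X → ℤ} {x y : X} {m n : ℕ}

/-- Reading the points `z` of an orbit with `c z < 0` as opening and those with `0 < c z` as
closing parentheses, `IsMatch T c x n` says that the parenthesis opened at `x` is closed at
`T^[n] x`. The case `n = 0`, where `c x = 0`, matches `x` with itself. -/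
def IsMatch (T : X → X) (c : X → ℤ) (x : X) (n : ℕ) : Prop :=
  birkhoffSum T c (n + 1) x = 0 ∧ ∀ k < n, birkhoffSum T c (k + 1) x < 0

theorem exists_isMatch (hc : ∀ y, c y ≤ 1) (hx : c x ≤ 0) (h : ∃ n, 0 < birkhoffSum T c n x) :
    ∃ n, IsMatch T c x n := by
  classical
  have hex : ∃ n, 0 ≤ birkhoffSum T c (n + 1) x := by
    obtain ⟨_ | n, hn⟩ := h
    · exact absurd hn (by simp)
    · exact ⟨n, hn.le⟩
  have hlt : ∀ k < Nat.find hex, birkhoffSum T c (k + 1) x < 0 :=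
    fun k hk => not_le.1 (Nat.find_min hex hk)
  refine ⟨Nat.find hex, le_antisymm ?_ (Nat.find_spec hex), hlt⟩
  rcases hn : Nat.find hex with _ | n
  · simpa using hx
  · have hneg := hlt n (by lia)
    have hstep := hc (T^[n + 1] x)
    rw [birkhoffSum_succ]
    lia

theorem IsMatch.unique (hm : IsMatch T c x m) (hn : IsMatch T c x n) : m = n := by
  rcases lt_trichotomy m n with h | h | h
  · exact absurd hm.1 (hn.2 m h).ne
  · exact h
  · exact absurd hn.1 (hm.2 n h).ne

theorem IsMatch.apply_iterate_pos (h : IsMatch T c x n) (hn : n ≠ 0) : 0 < c (T^[n] x) := by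
  obtain ⟨k, rfl⟩ := Nat.exists_eq_succ_of_ne_zero hn
  have hzero := h.1
  have hneg := h.2 k k.lt_succ_self
  rw [birkhoffSum_succ] at hzero
  lia

theorem IsMatch.le_of_iterate_eq (hT : Injective T) (hx : IsMatch T c x m)
    (hy : IsMatch T c y n) (hxy : T^[m] x = T^[n] y) : m ≤ n := by
  by_contra! hlt
  obtain ⟨k, rfl⟩ := Nat.exists_eq_add_of_lt hlt
  have hyx : T^[k + 1] x = y := by
    apply hT.iterate n
    rw [← hxy, ← iterate_add_apply, add_assoc]
  -- After `k + 1` steps from `x` one is at `y`, whose parenthesis closes when that of `x` does.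
  have hsum := birkhoffSum_add T c (k + 1) (n + 1) x
  rw [hyx, hy.1, show k + 1 + (n + 1) = n + k + 1 + 1 by ring, hx.1] at hsum
  have hneg := hx.2 k (by lia)
  lia

theorem IsMatch.eq_of_iterate_eq (hT : Injective T) (hx : IsMatch T c x m)
    (hy : IsMatch T c y n) (hxy : T^[m] x = T^[n] y) : x = y := by
  obtain rfl := (hx.le_of_iterate_eq hT hy hxy).antisymm (hy.le_of_iterate_eq hT hx hxy.symm)
  exact hT.iterate m hxy

theorem isOpen_setOf_isMatch [TopologicalSpace X] (hT : Continuous T) (hc : Continuous c)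
    (n : ℕ) : IsOpen {x | IsMatch T c x n} := by
  have hsum : ∀ k, Continuous (birkhoffSum T c k) := fun k =>
    continuous_finsetSum _ fun i _ => hc.comp (hT.iterate i)
  have hset : {x | IsMatch T c x n} = birkhoffSum T c (n + 1) ⁻¹' {0} ∩
      ⋂ k ∈ Finset.range n, birkhoffSum T c (k + 1) ⁻¹' Iio 0 := by
    ext x
    simp [IsMatch]
  rw [hset]
  exact ((isOpen_discrete _).preimage (hsum _)).inter
    (isOpen_biInter_finset fun k _ => (isOpen_discrete _).preimage (hsum _))

end Matching

theorem integral_indicator_sub_indicator {X : Type*} [MeasurableSpace X] (μ : Measure X)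
    [IsFiniteMeasure μ] {A B : Set X} (hA : MeasurableSet A) (hB : MeasurableSet B) :
    ∫ x, (((B.indicator 1 - A.indicator 1 : X → ℤ) x : ℤ) : ℝ) ∂μ = μ.real B - μ.real A := by
  have hint : ∀ {S : Set X}, MeasurableSet S → Integrable (S.indicator (1 : X → ℝ)) μ :=
    fun hS => (integrable_const 1).indicator hS
  rw [← integral_indicator_one hB, ← integral_indicator_one hA,
    ← integral_sub (hint hB) (hint hA)]
  congr with x
  by_cases hxA : x ∈ A <;> by_cases hxB : x ∈ B <;> simp [hxA, hxB]

section CyclicGroup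

variable {G X : Type*} [Group G] [MulAction G X]

theorem smulInvariantMeasure_of_measurePreserving [MeasurableSpace X] [MeasurableConstSMul G X]
    {γ : G} (hγ : ∀ δ : G, δ ∈ Subgroup.zpowers γ) {μ : Measure X}
    (h : MeasurePreserving (γ • · : X → X) μ μ) : SMulInvariantMeasure G X μ := by
  refine ((smulInvariantMeasure_tfae G μ).out 6 0).1 fun δ => ?_
  obtain ⟨n, rfl⟩ := hγ δ
  refine zpow_induction_left (P := fun δ => MeasurePreserving (δ • · : X → X) μ μ) ?_
    (fun δ hδ => ?_) (fun δ hδ => ?_) n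
  · exact (funext (one_smul G) : ((1 : G) • · : X → X) = id) ▸ .id μ
  · exact (funext (mul_smul γ δ) : ((γ * δ) • · : X → X) = _) ▸ h.comp hδ
  · exact (funext (mul_smul γ⁻¹ δ) : ((γ⁻¹ * δ) • · : X → X) = _) ▸
      (h.symm (MeasurableEquiv.smul γ)).comp hδ

variable [TopologicalSpace X] [ContinuousConstSMul G X]

theorem exists_orbitHomeomorphic_of_isMatch [Nonempty X] {γ : G} {c : X → ℤ} {A B : Set X}
    (hc : Continuous c) (hA : IsOpen A) (hmatch : ∀ x ∈ A, ∃ n, IsMatch (γ • ·) c x n)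
    (hB : ∀ x ∈ A, ∀ n, IsMatch (γ • ·) c x n → γ ^ n • x ∈ B) :
    ∃ C ⊆ B, OrbitHomeomorphic G A C := by
  classical
  choose! N hN using hmatch
  have hlocal : IsLocalHomeomorphOn (fun x => γ ^ N x • x) A := .mk _ _ fun x hx => by
    have hopen := hA.inter (isOpen_setOf_isMatch (continuous_const_smul γ) hc (N x))
    refine ⟨(Homeomorph.smul (γ ^ N x)).toOpenPartialHomeomorphOfImageEq _ hopen _ rfl,
      ⟨hx, hN x hx⟩, fun y hy => ?_⟩
    exact congrArg (γ ^ · • y) ((hN y hy.1).unique hy.2)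
  have hinj : InjOn (fun x => γ ^ N x • x) A := fun x hx y hy hxy =>
    (hN x hx).eq_of_iterate_eq (MulAction.injective γ) (hN y hy)
      (by simpa only [smul_iterate] using hxy)
  obtain ⟨e, hsource, htarget, he⟩ := exists_openPartialHomeomorph_of_injOn hlocal hA hinj
  exact ⟨_, image_subset_iff.2 fun x hx => hB x hx _ (hN x hx), e, hsource, htarget,
    fun x _ => he ▸ mem_orbit x (γ ^ N x)⟩

theorem exists_isMatch_of_integral_pos [CompactSpace X] [TopologicalSpace.MetrizableSpace X]
    [MeasurableSpace X] [BorelSpace X] {γ : G} (hγ : ∀ δ : G, δ ∈ Subgroup.zpowers γ) {c : X → ℤ}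
    (hc : Continuous c) (hc1 : ∀ y, c y ≤ 1)
    (hpos : ∀ (μ : Measure X) [IsProbabilityMeasure μ] [SMulInvariantMeasure G X μ],
      0 < ∫ y, (c y : ℝ) ∂μ) {x : X} (hx : c x ≤ 0) : ∃ n, IsMatch (γ • ·) c x n := by
  obtain ⟨n, hn⟩ := exists_birkhoffSum_pos (continuous_const_smul γ)
    (continuous_of_discreteTopology.comp hc : Continuous fun y => (c y : ℝ)) (fun μ _ hμ => by
      have := smulInvariantMeasure_of_measurePreserving hγ hμ
      exact hpos μ) x
  refine exists_isMatch hc1 hx ⟨n, ?_⟩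
  rw [← Int.cast_pos (R := ℝ)]
  exact hn.trans_eq (map_birkhoffSum (Int.castAddHom ℝ) _ c n x).symm

theorem dynamicalComparison_of_isCyclic [IsCyclic G] [Nonempty X] [CompactSpace X]
    [TopologicalSpace.MetrizableSpace X] [MeasurableSpace X] [BorelSpace X] :
    DynamicalComparison G X := by
  intro A B hA hB hAB
  obtain ⟨γ, hγ⟩ := IsCyclic.exists_generator (α := G)
  let c : X → ℤ := B.indicator 1 - A.indicator 1
  have hc : Continuous c :=
    (hB.continuous_indicator continuous_one).sub (hA.continuous_indicator continuous_one)
  have hcB : ∀ x, 0 < c x → x ∈ B := fun x hx => by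
    by_contra hxB
    by_cases hxA : x ∈ A <;> simp [c, hxA, hxB] at hx
  refine exists_orbitHomeomorphic_of_isMatch (γ := γ) hc hA.isOpen (fun x hx => ?_)
    fun x hx n hn => ?_
  · refine exists_isMatch_of_integral_pos hγ hc (fun y => ?_) (fun μ _ _ => ?_) ?_
    · by_cases hyA : y ∈ A <;> by_cases hyB : y ∈ B <;> simp [c, hyA, hyB]
    · rw [integral_indicator_sub_indicator μ hA.isOpen.measurableSet hB.isOpen.measurableSet,
        sub_pos]
      exact hAB μ
    · by_cases hxB : x ∈ B <;> simp [c, hx, hxB]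
  · rcases eq_or_ne n 0 with rfl | hn0
    · by_contra hxB
      simpa [c, hx, show x ∉ B by simpa using hxB] using hn.1
    · exact smul_iterate_apply γ n x ▸ hcB _ (hn.apply_iterate_pos hn0)

end CyclicGroup

section Zpowers

open Subgroup

variable {X : Type*} [TopologicalSpace X]

theorem mem_orbit_zpowers_iff {α : Type*} {σ : Equiv.Perm α} {x y : α} :
    y ∈ orbit (zpowers σ) x ↔ ∃ n : ℤ, y = (σ ^ n) x := by
  simp only [mem_orbit_iff, exists_zpowers, eq_comm]
  rfl

theorem inFullGroup_iff_forall_mem_orbit {g h : X ≃ₜ X} :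
    DynSimplex.InFullGroup g h ↔ ∀ x, h x ∈ orbit (zpowers g.toEquiv) x :=
  forall_congr' fun _ => mem_orbit_zpowers_iff.symm

instance continuousConstSMul_zpowers (g : X ≃ₜ X) :
    ContinuousConstSMul (zpowers g.toEquiv) X := by
  refine ⟨?_⟩
  rintro ⟨_, n, rfl⟩
  exact zpow_induction_left (P := fun σ : Equiv.Perm X => Continuous σ) continuous_id
    (fun _ h => g.continuous.comp h) (fun _ h => g.symm.continuous.comp h) n

theorem isMinimal_zpowers {g : X ≃ₜ X} (hg : DynSimplex.IsMinimal g) :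
    MulAction.IsMinimal (zpowers g.toEquiv) X := by
  refine ⟨fun x => (hg x).mono ?_⟩
  rintro _ ⟨n, rfl⟩
  exact mem_orbit_zpowers_iff.2 ⟨n, rfl⟩

theorem preserves_iff_smulInvariantMeasure [MeasurableSpace X] [BorelSpace X] {g : X ≃ₜ X}
    {μ : ProbabilityMeasure X} :
    DynSimplex.Preserves g μ ↔ SMulInvariantMeasure (zpowers g.toEquiv) X (μ : Measure X) := by
  let γ : zpowers g.toEquiv := ⟨g.toEquiv, mem_zpowers g.toEquiv⟩
  have hγ : ∀ δ, δ ∈ zpowers γ := by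
    rintro ⟨_, n, rfl⟩
    exact ⟨n, rfl⟩
  exact ⟨fun h => smulInvariantMeasure_of_measurePreserving hγ ⟨g.continuous.measurable, h⟩,
    fun _ => (measurePreserving_smul γ (μ : Measure X)).map_eq⟩

end Zpowers

end FullGroupClosure

theorem closure_fullGroup_eq_invariant_preserving
    {X : Type*} [TopologicalSpace X] [CompactSpace X]
    [TopologicalSpace.MetrizableSpace X] [TotallyDisconnectedSpace X] [PerfectSpace X]
    [Nonempty X] [MeasurableSpace X] [BorelSpace X]
    (g : X ≃ₜ X) (hg : DynSimplex.IsMinimal g) :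
    closure {h : X ≃ₜ X | DynSimplex.InFullGroup g h} =
      {h : X ≃ₜ X | ∀ μ : MeasureTheory.ProbabilityMeasure X,
        DynSimplex.Preserves g μ → DynSimplex.Preserves h μ} := by
  have : MulAction.IsMinimal (Subgroup.zpowers g.toEquiv) X :=
    FullGroupClosure.isMinimal_zpowers hg
  simp only [FullGroupClosure.inFullGroup_iff_forall_mem_orbit,
    FullGroupClosure.preserves_iff_smulInvariantMeasure (g := g)]
  rw [FullGroupClosure.closure_setOf_forall_mem_orbit_eq
    FullGroupClosure.dynamicalComparison_of_isCyclic]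
  ext h
  exact ⟨fun hh μ _ => hh μ, fun hh μ hμ _ => hh ⟨μ, hμ⟩ ‹_›⟩
end

section
/- Let X be a Cantor space and K a compact convex subset of Prob(X) with finitely many extreme points, such that every μ ∈ K is atomless and has full support. Then K is approximately divisible. -/
/-!
Each of the inequalities `μ A - ε ≤ n * μ B` and `n * μ B ≤ μ A` bounds a continuous linear
functional of `μ`, and on a compact set such a functional is maximal at an extreme point. So only
the finitely many extreme points `μ₁, …, μ_d` matter, and these are atomless.

Cut `A` into clopen pieces `A_j` whose `μ_i`-measures are all less than `δ`, and let `v_j ∈ ℝ^d` be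
the vector of the measures of `A_j`. The polytope of all `y ∈ [0, 1]^N` with
`∑ y_j v_j = (1 / n) ∑ v_j` contains `(1 / n, …, 1 / n)`, so it has an extreme point. There the
`v_j` with `0 < y_j < 1` are linearly independent, hence at most `d` in number, and the union `B` of
the `A_j` with `y_j = 1` satisfies `(1 / n) μ_i A - d δ ≤ μ_i B ≤ (1 / n) μ_i A`.
-/

open MeasureTheory

namespace DynSimplex

open Set Filter TopologicalSpace
open scoped Topology NNReal ENNReal

section LinearProgramming

variable {κ E : Type*} [AddCommGroup E] [Module ℝ E]

/-- The feasible set of a linear program with bounded variables: the points `y` of the box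
`[a, b]` with `∑ j, y j • v j = w`. -/
def feasibleSet [Fintype κ] (v : κ → E) (w : E) (a b : κ → ℝ) : Set (κ → ℝ) :=
  {y ∈ Icc a b | Fintype.linearCombination ℝ v y = w}

lemma isCompact_feasibleSet [Fintype κ] [TopologicalSpace E] [T1Space E] [ContinuousAdd E]
    [ContinuousSMul ℝ E] (v : κ → E) (w : E) (a b : κ → ℝ) : IsCompact (feasibleSet v w a b) := by
  have hcont : Continuous fun y : κ → ℝ => Fintype.linearCombination ℝ v y := by
    simp only [Fintype.linearCombination_apply]
    fun_prop
  exact isCompact_Icc.inter_right (isClosed_singleton.preimage hcont)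

lemma eventually_add_smul_mem_Icc [Finite κ] {a b y c : κ → ℝ} (hy : y ∈ Icc a b)
    (hc : ∀ j, c j ≠ 0 → y j ∈ Ioo (a j) (b j)) : ∀ᶠ t : ℝ in 𝓝 0, y + t • c ∈ Icc a b := by
  simp only [← pi_univ_Icc, mem_univ_pi] at hy ⊢
  refine eventually_all.2 fun j => ?_
  obtain hj | hj := eq_or_ne (c j) 0
  · simp [hj, hy j]
  · have hcont : Continuous fun t : ℝ => (y + t • c) j := by
      simp only [Pi.add_apply, Pi.smul_apply]
      fun_prop
    exact hcont.continuousAt.eventually_mem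
      (by simpa using Icc_mem_nhds (hc j hj).1 (hc j hj).2)

lemma eq_zero_of_add_mem_of_sub_mem_of_mem_extremePoints {s : Set E} {x d : E}
    (hx : x ∈ s.extremePoints ℝ) (hadd : x + d ∈ s) (hsub : x - d ∈ s) : d = 0 := by
  have hseg : x ∈ openSegment ℝ (x + d) (x - d) :=
    ⟨1 / 2, 1 / 2, by norm_num, by norm_num, by norm_num, by module⟩
  simpa using hx.2 hadd hsub hseg

lemma linearIndepOn_of_mem_extremePoints_feasibleSet [Fintype κ] {v : κ → E} {w : E}
    {a b y : κ → ℝ} (hy : y ∈ (feasibleSet v w a b).extremePoints ℝ) :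
    LinearIndepOn ℝ v {j | y j ∈ Ioo (a j) (b j)} := by
  refine linearIndepOn_iff.2 fun c hc hcv => ?_
  have hsupp : ∀ j, c j ≠ 0 → y j ∈ Ioo (a j) (b j) := fun j hj =>
    hc (Finsupp.mem_support_iff.2 hj)
  have hsol : ∀ t : ℝ, Fintype.linearCombination ℝ v (y + t • ⇑c) = w := by
    intro t
    have hc0 : Fintype.linearCombination ℝ v c = 0 := by
      rw [← hcv, ← Finsupp.linearCombination_eq_fintype_linearCombination_apply ℝ v]
      congr
      ext
      simp
    rw [map_add, map_smul, hc0, smul_zero, add_zero, hy.1.2]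
  have hfeas : ∀ᶠ t : ℝ in 𝓝 0, y + t • ⇑c ∈ feasibleSet v w a b :=
    (eventually_add_smul_mem_Icc hy.1.1 hsupp).mono fun t ht => ⟨ht, hsol t⟩
  have hfeas_neg : ∀ᶠ t : ℝ in 𝓝 0, y - t • ⇑c ∈ feasibleSet v w a b := by
    have hneg : Tendsto (fun t : ℝ => -t) (𝓝 0) (𝓝 0) := by simpa using tendsto_neg (0 : ℝ)
    simpa only [neg_smul, ← sub_eq_add_neg] using hneg.eventually hfeas
  obtain ⟨t, ⟨hadd, hsub⟩, ht⟩ :=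
    (((hfeas.and hfeas_neg).filter_mono nhdsWithin_le_nhds).and
      (self_mem_nhdsWithin (s := ({0}ᶜ : Set ℝ)))).exists
  have htc := eq_zero_of_add_mem_of_sub_mem_of_mem_extremePoints hy hadd hsub
  exact DFunLike.coe_injective ((smul_eq_zero.1 htc).resolve_left ht)

lemma exists_mem_feasibleSet_ncard_le_finrank [Fintype κ] [TopologicalSpace E] [T1Space E]
    [ContinuousAdd E] [ContinuousSMul ℝ E] [FiniteDimensional ℝ E] {v : κ → E} {w : E}
    {a b : κ → ℝ} (h : (feasibleSet v w a b).Nonempty) :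
    ∃ y ∈ feasibleSet v w a b, {j | y j ∈ Ioo (a j) (b j)}.ncard ≤ Module.finrank ℝ E := by
  classical
  obtain ⟨y, hy⟩ := (isCompact_feasibleSet v w a b).extremePoints_nonempty h
  refine ⟨y, hy.1, ?_⟩
  rw [← Nat.card_coe_set_eq, Nat.card_eq_fintype_card]
  exact (linearIndepOn_of_mem_extremePoints_feasibleSet hy).fintype_card_le_finrank

end LinearProgramming

section Rounding

variable {κ : Type*} [Fintype κ]

lemma sum_filter_eq_one_le_sum_mul {y u : κ → ℝ} [DecidablePred (y · = 1)]
    (hy : ∀ j, 0 ≤ y j) (hu : ∀ j, 0 ≤ u j) :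
    ∑ j with y j = 1, u j ≤ ∑ j, y j * u j := by
  rw [Finset.sum_filter]
  refine Finset.sum_le_sum fun j _ => ?_
  split_ifs with hj
  · rw [hj, one_mul]
  · exact mul_nonneg (hy j) (hu j)

lemma sum_mul_le_sum_filter_eq_one_add {y u : κ → ℝ} [DecidablePred (y · = 1)] {δ : ℝ}
    (hy : y ∈ Icc 0 1) (hu : ∀ j, u j ∈ Icc 0 δ) :
    ∑ j, y j * u j ≤ ∑ j with y j = 1, u j + {j | y j ∈ Ioo 0 1}.ncard * δ := by
  classical
  have hcard : {j | y j ∈ Ioo 0 1}.ncard * δ = ∑ j, if y j ∈ Ioo 0 1 then δ else 0 := by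
    rw [← Finset.sum_filter, Finset.sum_const, nsmul_eq_mul, ← ncard_coe_finset,
      Finset.coe_filter_univ]
  rw [hcard, Finset.sum_filter, ← Finset.sum_add_distrib]
  refine Finset.sum_le_sum fun j _ => ?_
  obtain hj1 | hj1 := eq_or_ne (y j) 1
  · simp [hj1]
  obtain hj0 | hj0 := eq_or_ne (y j) 0
  · simp [hj0]
  have hj : y j ∈ Ioo 0 1 := ⟨(hy.1 j).lt_of_ne' hj0, (hy.2 j).lt_of_ne hj1⟩
  rw [if_neg hj1, if_pos hj, zero_add]
  exact (mul_le_of_le_one_left (hu j).1 (hy.2 j)).trans (hu j).2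

lemma exists_finset_sum_mem_Icc {ι : Type*} [Fintype ι] {v : κ → ι → ℝ} {x : κ → ℝ}
    (hx : x ∈ Icc 0 1) {δ : ℝ} (hδ : 0 ≤ δ) (hv : ∀ j i, v j i ∈ Icc 0 δ) :
    ∃ S : Finset κ, ∀ i,
      ∑ j ∈ S, v j i ∈ Icc (∑ j, x j * v j i - Fintype.card ι * δ) (∑ j, x j * v j i) := by
  classical
  obtain ⟨y, ⟨hy, hyx⟩, hcard⟩ := exists_mem_feasibleSet_ncard_le_finrank
    (v := v) (w := Fintype.linearCombination ℝ v x) (a := 0) (b := 1) ⟨x, hx, rfl⟩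
  refine ⟨({j | y j = 1} : Finset κ), fun i => ?_⟩
  have hsum : ∑ j, y j * v j i = ∑ j, x j * v j i := by
    simpa [Fintype.linearCombination_apply] using congrFun hyx i
  have hfew : ({j | y j ∈ Ioo 0 1}.ncard : ℝ) * δ ≤ Fintype.card ι * δ := by
    rw [Module.finrank_fintype_fun_eq_card] at hcard
    exact mul_le_mul_of_nonneg_right (mod_cast hcard) hδ
  rw [← hsum]
  constructor
  · linarith [sum_mul_le_sum_filter_eq_one_add hy fun j => hv j i]
  · exact sum_filter_eq_one_le_sum_mul hy.1 fun j => (hv j i).1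

end Rounding

section ClopenSubsets

variable {X ι : Type*} [TopologicalSpace X] [MeasurableSpace X] [Finite ι] (μ : ι → Measure X)
  [∀ i, (μ i).OuterRegular] [∀ i, NullSingletonClass (μ i)]

lemma exists_opens_mem_forall_measure_lt (x : X) {δ : ℝ≥0∞} (hδ : 0 < δ) :
    ∃ U : Opens X, x ∈ U ∧ ∀ i, μ i U < δ := by
  have hi : ∀ i, ∃ U ⊇ {x}, IsOpen U ∧ μ i U < δ := fun i =>
    ({x} : Set X).exists_isOpen_lt_of_lt δ (by rwa [measure_singleton])
  choose U hxU hUo hUδ using hi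
  exact ⟨⟨⋂ i, U i, isOpen_iInter_of_finite hUo⟩, mem_iInter.2 fun i => hxU i rfl,
    fun i => (measure_mono (iInter_subset U i)).trans_lt (hUδ i)⟩

variable [CompactSpace X] [T2Space X] [TotallyDisconnectedSpace X] {A : Set X}

lemma exists_clopen_partition_measure_lt (hA : IsClopen A) {δ : ℝ≥0∞} (hδ : 0 < δ) :
    ∃ (N : ℕ) (C : Fin N → Set X), (∀ j, IsClopen (C j)) ∧ Pairwise (Function.onFun Disjoint C) ∧
      ⋃ j, C j = A ∧ ∀ j i, μ i (C j) < δ := by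
  choose U hxU hUδ using fun x => exists_opens_mem_forall_measure_lt μ x hδ
  have hcover : IsOpenCover U := .mk (eq_top_iff.2 fun x _ => Opens.mem_iSup.2 ⟨x, hxU x⟩)
  obtain ⟨N, W, hWU, hWun, hWd⟩ := hcover.exists_finite_nonempty_disjoint_clopen_cover
  refine ⟨N, fun j => A ∩ W j, fun j => hA.inter (W j).isClopen, fun j k hjk => ?_, ?_, ?_⟩
  · exact (Clopens.coe_disjoint.2 (hWd hjk)).mono inter_subset_right inter_subset_right
  · rw [← inter_iUnion, univ_subset_iff.1 hWun, inter_univ]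
  · intro j i
    obtain ⟨x, hx⟩ := (hWU j).2
    exact (measure_mono (inter_subset_right.trans hx)).trans_lt (hUδ x i)

-- An approximate, clopen form of Lyapunov's convexity theorem
lemma exists_isClopen_subset_measureReal_mem_Icc [OpensMeasurableSpace X]
    [∀ i, IsFiniteMeasure (μ i)] (hA : IsClopen A) {t : ℝ} (ht : t ∈ Icc 0 1) {ε : ℝ}
    (hε : 0 < ε) :
    ∃ B ⊆ A, IsClopen B ∧
      ∀ i, (μ i).real B ∈ Icc (t * (μ i).real A - ε) (t * (μ i).real A) := by
  have : Fintype ι := Fintype.ofFinite ι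
  obtain ⟨δ, hδ, hδε⟩ : ∃ δ > 0, Fintype.card ι * δ < ε := exists_pos_mul_lt hε _
  obtain ⟨N, C, hC, hCd, rfl, hCδ⟩ :=
    exists_clopen_partition_measure_lt μ hA (ENNReal.ofReal_pos.2 hδ)
  have hmem : ∀ j i, (μ i).real (C j) ∈ Icc 0 δ := fun j i =>
    ⟨measureReal_nonneg, ENNReal.toReal_le_of_le_ofReal hδ.le (hCδ j i).le⟩
  obtain ⟨S, hS⟩ := exists_finset_sum_mem_Icc (x := fun _ => t)
    ⟨fun _ => ht.1, fun _ => ht.2⟩ hδ.le hmem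
  refine ⟨⋃ j ∈ S, C j, iUnion₂_subset fun j _ => subset_iUnion C j,
    isClopen_biUnion_finset fun j _ => hC j, fun i => ?_⟩
  have hCm : ∀ j, MeasurableSet (C j) := fun j => (hC j).isOpen.measurableSet
  rw [measureReal_biUnion_finset (fun j _ k _ hjk => hCd hjk) fun j _ => hCm j,
    measureReal_iUnion_fintype hCd hCm, Finset.mul_sum]
  exact ⟨(sub_le_sub_left hδε.le _).trans (hS i).1, (hS i).2⟩

end ClopenSubsets

section ExtremePoints

-- Bauer's maximum principle for linear functionals
lemma exists_mem_extremePoints_isMaxOn {E : Type*} [AddCommGroup E] [Module ℝ E]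
    [TopologicalSpace E] [T2Space E] [IsTopologicalAddGroup E] [ContinuousSMul ℝ E]
    [LocallyConvexSpace ℝ E] {s : Set E} (hs : IsCompact s) (hne : s.Nonempty)
    (l : StrongDual ℝ E) : ∃ x ∈ s.extremePoints ℝ, IsMaxOn l s x := by
  obtain ⟨z, hz, hzmax⟩ := hs.exists_isMaxOn hne l.continuous.continuousOn
  have hexp : IsExposed ℝ s (l.toExposed s) := ContinuousLinearMap.toExposed.isExposed
  obtain ⟨x, hx⟩ := (hexp.isCompact hs).extremePoints_nonempty ⟨z, hz, hzmax⟩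
  exact ⟨x, hexp.isExtreme.extremePoints_subset_extremePoints hx, hx.1.2⟩

lemma extremePoints_image_subset {𝕜 E F : Type*} [Semiring 𝕜] [PartialOrder 𝕜]
    [AddCommMonoid E] [Module 𝕜 E] [AddCommMonoid F] [Module 𝕜 F] {f : E →ₗ[𝕜] F}
    (hf : Function.Injective f) (s : Set E) :
    (f '' s).extremePoints 𝕜 ⊆ f '' s.extremePoints 𝕜 := by
  rintro _ ⟨⟨x, hx, rfl⟩, hext⟩
  refine mem_image_of_mem f ⟨hx, ?_⟩
  rintro y hy z hz ⟨a, b, ha, hb, hab, rfl⟩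
  exact hf (hext (mem_image_of_mem f hy) (mem_image_of_mem f hz)
    ⟨a, b, ha, hb, hab, by simp only [map_add, map_smul]⟩)

lemma openSegment_nnreal {E : Type*} [AddCommMonoid E] [Module ℝ E] (x y : E) :
    openSegment ℝ≥0 x y = openSegment ℝ x y := by
  ext z
  constructor
  · rintro ⟨a, b, ha, hb, hab, rfl⟩
    exact ⟨a, b, ha, hb, mod_cast hab, rfl⟩
  · rintro ⟨a, b, ha, hb, hab, rfl⟩
    lift a to ℝ≥0 using ha.le
    lift b to ℝ≥0 using hb.le
    exact ⟨a, b, mod_cast ha, mod_cast hb, mod_cast hab, rfl⟩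

lemma extremePoints_nnreal {E : Type*} [AddCommMonoid E] [Module ℝ E] (s : Set E) :
    s.extremePoints ℝ≥0 = s.extremePoints ℝ := by
  simp only [extremePoints, openSegment_nnreal]

end ExtremePoints

section ClopenValues

variable {X : Type*} [TopologicalSpace X] [MeasurableSpace X]

/-- The values of a finite measure on clopen sets. This represents measures linearly in a real
locally convex space, which finite measures themselves, being only an `ℝ≥0`-module, do not form. -/
noncomputable def clopenValues : FiniteMeasure X →ₗ[ℝ≥0] Clopens X → ℝ where
  toFun μ B := μ B
  map_add' μ ν := by
    ext B
    simp [FiniteMeasure.coeFn_add]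
  map_smul' c μ := by
    ext B
    simp [NNReal.smul_def]

lemma clopenValues_apply (μ : FiniteMeasure X) (B : Clopens X) : clopenValues μ B = μ B := rfl

lemma continuous_clopenValues [OpensMeasurableSpace X] [HasOuterApproxClosed X] :
    Continuous fun μ : ProbabilityMeasure X => clopenValues μ.toFiniteMeasure :=
  continuous_pi fun B => NNReal.continuous_coe.comp <| continuous_iff_continuousAt.2 fun _ =>
    ProbabilityMeasure.tendsto_measure_of_isClopen_of_tendsto tendsto_id B.isClopen

variable [LocallyCompactSpace X] [T2Space X] [TotallyDisconnectedSpace X]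
  [SecondCountableTopology X] [BorelSpace X]

lemma clopenValues_injective : Function.Injective (clopenValues (X := X)) := by
  intro μ ν h
  have hclopen : ∀ B : Set X, IsClopen B → (μ : Measure X) B = (ν : Measure X) B := by
    intro B hB
    have hB' : μ B = ν B := NNReal.coe_injective (congrFun h ⟨B, hB⟩)
    rw [← FiniteMeasure.ennreal_coeFn_eq_coeFn_toMeasure, hB',
      FiniteMeasure.ennreal_coeFn_eq_coeFn_toMeasure]
  refine FiniteMeasure.toMeasure_injective (ext_of_generate_finite {B : Set X | IsClopen B} ?_
    (fun B hB C hC _ => hB.inter hC) hclopen (hclopen _ isClopen_univ))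
  rw [BorelSpace.measurable_eq (α := X)]
  exact loc_compact_Haus_tot_disc_of_zero_dim.borel_eq_generateFrom

lemma apply_clopenValues_le_of_probExtremePoints {K : Set (ProbabilityMeasure X)}
    (hK : IsCompact K) (l : StrongDual ℝ (Clopens X → ℝ)) {c : ℝ}
    (hl : ∀ μ ∈ ProbExtremePoints K, l (clopenValues μ.toFiniteMeasure) ≤ c)
    {μ : ProbabilityMeasure X} (hμ : μ ∈ K) : l (clopenValues μ.toFiniteMeasure) ≤ c := by
  have hcompact : IsCompact (clopenValues '' (ProbabilityMeasure.toFiniteMeasure '' K)) := by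
    simpa only [image_image] using hK.image continuous_clopenValues
  have hμK := mem_image_of_mem clopenValues
    (mem_image_of_mem ProbabilityMeasure.toFiniteMeasure hμ)
  obtain ⟨x, hx, hmax⟩ := exists_mem_extremePoints_isMaxOn hcompact ⟨_, hμK⟩ l
  rw [← extremePoints_nnreal] at hx
  obtain ⟨_, hν, rfl⟩ := extremePoints_image_subset clopenValues_injective _ hx
  obtain ⟨ν, -, rfl⟩ := hν.1
  exact (hmax hμK).trans (hl ν hν)

end ClopenValues

section ApproximatelyDivisible

variable {X : Type*} [MeasurableSpace X] {K : Set (ProbabilityMeasure X)}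

lemma probExtremePoints_subset : ProbExtremePoints K ⊆ K := by
  rintro μ ⟨⟨ν, hν, hνμ⟩, -⟩
  rwa [← (Subtype.ext (congrArg FiniteMeasure.toMeasure hνμ) : ν = μ)]

variable [TopologicalSpace X]

lemma ApproximatelyDivisible.of_probExtremePoints [LocallyCompactSpace X] [T2Space X]
    [TotallyDisconnectedSpace X] [SecondCountableTopology X] [BorelSpace X] (hK : IsCompact K)
    (h : ApproximatelyDivisible (ProbExtremePoints K)) : ApproximatelyDivisible K := by
  intro A hA n hn ε hε
  obtain ⟨B, hB, hBA, hdiv⟩ := h A hA n hn ε hε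
  let evalA : StrongDual ℝ (Clopens X → ℝ) := .proj ⟨A, hA⟩
  let evalB : StrongDual ℝ (Clopens X → ℝ) := .proj ⟨B, hB⟩
  refine ⟨B, hB, hBA, fun μ hμ => ⟨?_, ?_⟩⟩
  · exact sub_le_comm.1 (apply_clopenValues_le_of_probExtremePoints hK (evalA - (n : ℝ) • evalB)
      (fun ν hν => sub_le_comm.1 (hdiv ν hν).1) hμ)
  · exact sub_nonpos.1 (apply_clopenValues_le_of_probExtremePoints hK ((n : ℝ) • evalB - evalA)
      (fun ν hν => sub_nonpos.2 (hdiv ν hν).2) hμ)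

lemma approximatelyDivisible_of_finite [CompactSpace X] [MetrizableSpace X]
    [TotallyDisconnectedSpace X] [BorelSpace X] (hK : K.Finite) (hatom : ∀ μ ∈ K, Atomless μ) :
    ApproximatelyDivisible K := by
  intro A hA n hn ε hε
  have : Finite K := hK
  have : ∀ μ : K, NullSingletonClass ((μ : ProbabilityMeasure X) : Measure X) := fun μ =>
    ⟨fun x => (ProbabilityMeasure.null_iff_toMeasure_null _ _).1 (hatom μ μ.2 x)⟩
  have hn0 : (0 : ℝ) < n := mod_cast hn
  obtain ⟨B, hBA, hB, hdiv⟩ := exists_isClopen_subset_measureReal_mem_Icc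
    (fun μ : K => ((μ : ProbabilityMeasure X) : Measure X)) hA (t := (n : ℝ)⁻¹)
    ⟨by positivity, inv_le_one_of_one_le₀ (mod_cast hn)⟩ (div_pos hε hn0)
  refine ⟨B, hB, hBA, fun μ hμ => ?_⟩
  obtain ⟨hlower, hupper⟩ := hdiv ⟨μ, hμ⟩
  simp only [ProbabilityMeasure.measureReal_eq_coe_coeFn] at hlower hupper
  rw [inv_mul_eq_div, ← sub_div, div_le_iff₀' hn0] at hlower
  rw [inv_mul_eq_div, le_div_iff₀' hn0] at hupper
  exact ⟨hlower, hupper⟩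

end ApproximatelyDivisible

end DynSimplex

theorem approximatelyDivisible_of_finite_extremePoints_general
    {X : Type*} [TopologicalSpace X] [CompactSpace X]
    [TopologicalSpace.MetrizableSpace X] [TotallyDisconnectedSpace X]
    [MeasurableSpace X] [BorelSpace X]
    (K : Set (MeasureTheory.ProbabilityMeasure X)) (hK : IsCompact K)
    (hfin : (DynSimplex.ProbExtremePoints K).Finite)
    (hatom : ∀ μ ∈ DynSimplex.ProbExtremePoints K, DynSimplex.Atomless μ) :
    DynSimplex.ApproximatelyDivisible K :=
  .of_probExtremePoints hK (DynSimplex.approximatelyDivisible_of_finite hfin hatom)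

theorem approximatelyDivisible_of_finite_extremePoints
    {X : Type*} [TopologicalSpace X] [CompactSpace X]
    [TopologicalSpace.MetrizableSpace X] [TotallyDisconnectedSpace X] [PerfectSpace X]
    [Nonempty X] [MeasurableSpace X] [BorelSpace X]
    (K : Set (MeasureTheory.ProbabilityMeasure X)) (hK : IsCompact K)
    (hconv : DynSimplex.ProbConvex K)
    (hfin : (DynSimplex.ProbExtremePoints K).Finite)
    (hmeas : ∀ μ ∈ K, DynSimplex.Atomless μ ∧ DynSimplex.FullSupport μ) :
    DynSimplex.ApproximatelyDivisible K :=
  approximatelyDivisible_of_finite_extremePoints_general K hK hfin fun μ hμ =>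
    (hmeas μ (DynSimplex.probExtremePoints_subset hμ)).1
end

section
/- Let X be a Cantor space and g a minimal homeomorphism of X. Then the set K_g of all g-invariant Borel probability measures on X is a dynamical simplex; in particular, K_g is approximately divisible. -/
/-!
The argument works for a continuous, not necessarily invertible map `T` all of whose forward orbits
are dense. For a minimal homeomorphism of a compact space forward orbits are dense, because the
limit points of a forward orbit contain a two-sided orbit.

Invariant measures exist by the Krylov–Bogoliubov argument: they are the limits of empirical
measures of longer and longer orbit segments. They are atomless by Poincaré recurrence, as there are
no periodic points, and they have full support because every orbit visits every nonempty open set.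

*Goodness.* Let `μ A < μ B` for all invariant `μ`, and let `f = 1_A - 1_B`. By Krylov–Bogoliubov,
the Birkhoff sums of `f` of some length are everywhere nonpositive. So the maximum `Q` of the
Birkhoff sums of `f` over all smaller lengths is a continuous integer-valued function which
satisfies `Q = max 0 (f + Q ∘ T)`. It follows that `1_A + Q ∘ T - Q = min (1_A + Q ∘ T) 1_B` is the
indicator function of a clopen set `C ⊆ B`. It differs from `1_A` by a coboundary, so `μ C = μ A`
for all invariant `μ`.

*Approximate divisibility.* A point which is not periodic has a clopen neighbourhood `Y` with many
disjoint preimages, and hence with `n * μ Y ≤ ε` for all invariant `μ`. Let `U x` be the number,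
modulo `n`, of visits of the orbit of `x` to `A` before it first hits `Y`. Selecting every `n`-th
visit gives a clopen `B ⊆ A` with `n 1_B ≤ 1_A + U ∘ T - U ≤ n 1_B + n 1_Y`, and integration yields
`n * μ B ≤ μ A ≤ n * μ B + ε`.
-/

open MeasureTheory

namespace DynSimplex

open Filter Function Set Topology

section Coboundary

variable {α E : Type*} [MeasurableSpace α] {μ : Measure α} {T : α → α}

lemma integral_add_comp_sub [NormedAddCommGroup E] [NormedSpace ℝ E]
    (hT : MeasurePreserving T μ μ) {f u : α → E} (hf : Integrable f μ) (hu : Integrable u μ) :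
    ∫ x, (f x + u (T x) - u x) ∂μ = ∫ x, f x ∂μ := by
  have huT : Integrable (fun x => u (T x)) μ := hT.integrable_comp_of_integrable hu
  have hint : ∫ x, u (T x) ∂μ = ∫ x, u x ∂μ := by
    rw [← integral_map hT.aemeasurable (hT.map_eq.symm ▸ hu.aestronglyMeasurable), hT.map_eq]
  calc ∫ x, (f x + u (T x) - u x) ∂μ
      = ∫ x, (f x + u (T x)) ∂μ - ∫ x, u x ∂μ := integral_sub (hf.add huT) hu
    _ = ∫ x, f x ∂μ := by rw [integral_add hf huT, hint, add_sub_cancel_right]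

end Coboundary

section ContinuousFunctions

variable {X M : Type*} [TopologicalSpace X]

lemma continuous_indicator_one_of_isClopen [TopologicalSpace M] [Zero M] [One M] {A : Set X}
    (hA : IsClopen A) : Continuous (A.indicator (1 : X → M)) :=
  continuous_one.indicator (by simp [hA.frontier_eq])

lemma continuous_birkhoffSum [AddCommMonoid M] [TopologicalSpace M] [ContinuousAdd M]
    {T : X → X} {f : X → M} (hT : Continuous T) (hf : Continuous f) (n : ℕ) :
    Continuous (birkhoffSum T f n) :=
  continuous_finsetSum _ fun i _ => hf.comp (hT.iterate i)

lemma integrable_of_continuous [CompactSpace X] [MeasurableSpace X] [BorelSpace X]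
    {E : Type*} [NormedAddCommGroup E] {f : X → E} (hf : Continuous f) (μ : Measure X)
    [IsFiniteMeasure μ] : Integrable f μ :=
  hf.integrable_of_hasCompactSupport (.of_compactSpace f)

end ContinuousFunctions

section KrylovBogoliubov

variable {X : Type*} [MeasurableSpace X]

/-- The empirical measure of the orbit segment `x, T x, …, T^[n] x`. Segments have `n + 1` points,
so that this is a probability measure for every `n`. -/
noncomputable def empiricalMeasure (T : X → X) (n : ℕ) (x : X) : ProbabilityMeasure X :=
  ⟨((n + 1 : ℕ) : ENNReal)⁻¹ • ∑ i ∈ Finset.range (n + 1), Measure.dirac (T^[i] x),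
    ⟨by simpa using ENNReal.inv_mul_cancel (by simp) (by finiteness)⟩⟩

lemma integral_empiricalMeasure {T : X → X} {n : ℕ} {x : X} {E : Type*} [NormedAddCommGroup E]
    [NormedSpace ℝ E] [CompleteSpace E] {f : X → E} (hf : StronglyMeasurable f) :
    ∫ y, f y ∂(empiricalMeasure T n x : Measure X) = birkhoffAverage ℝ T f (n + 1) x := by
  have hdirac (i : ℕ) : Integrable f (Measure.dirac (T^[i] x)) :=
    integrable_dirac' hf (by finiteness)
  simp only [empiricalMeasure, ProbabilityMeasure.coe_mk, integral_smul_measure,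
    integral_finsetSum_measure fun i _ => hdirac i, integral_dirac' f _ hf, ENNReal.toReal_inv,
    ENNReal.toReal_natCast, birkhoffAverage, birkhoffSum]

variable [TopologicalSpace X] [BorelSpace X] [HasOuterApproxClosed X] {T : X → X}

lemma measurePreserving_of_tendsto_empiricalMeasure {ι : Type*} {l : Filter ι} [l.NeBot]
    {n : ι → ℕ} {x : ι → X} {μ : ProbabilityMeasure X} (hT : Continuous T)
    (hn : Tendsto n l atTop)
    (hμ : Tendsto (fun k => empiricalMeasure T (n k) (x k)) l (𝓝 μ)) :
    MeasurePreserving T (μ : Measure X) μ := by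
  refine ⟨hT.measurable, ?_⟩
  have := Measure.isProbabilityMeasure_map (μ := (μ : Measure X)) hT.aemeasurable
  refine ext_of_forall_integral_eq_of_IsFiniteMeasure fun φ => ?_
  have hlim := ProbabilityMeasure.tendsto_iff_forall_integral_tendsto.1 hμ
  rw [integral_map hT.aemeasurable φ.continuous.aestronglyMeasurable]
  refine tendsto_nhds_unique (hlim (φ.compContinuous ⟨T, hT⟩)) ((hlim φ).congr_dist ?_)
  have hbound : Tendsto (fun k => 2 * ‖φ‖ / ((n k + 1 : ℕ) : ℝ)) l (𝓝 0) :=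
    ((tendsto_const_div_atTop_nhds_zero_nat _).comp (tendsto_add_atTop_nat 1)).comp hn
  refine squeeze_zero (fun _ => dist_nonneg) (fun k => ?_) hbound
  rw [integral_empiricalMeasure φ.continuous.stronglyMeasurable,
    integral_empiricalMeasure (φ.compContinuous ⟨T, hT⟩).continuous.stronglyMeasurable]
  have hcomp : birkhoffAverage ℝ T (φ.compContinuous ⟨T, hT⟩) (n k + 1) (x k) =
      birkhoffAverage ℝ T φ (n k + 1) (T (x k)) := by
    simp only [birkhoffAverage, birkhoffSum, BoundedContinuousFunction.compContinuous_apply,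
      ContinuousMap.coe_mk, ← iterate_succ_apply, ← iterate_succ_apply']
  rw [hcomp, dist_comm, dist_birkhoffAverage_apply_birkhoffAverage]
  gcongr
  exact φ.dist_le_two_norm _ _

lemma exists_measurePreserving_integral_nonneg [CompactSpace X] [T2Space X] (hT : Continuous T)
    {f : X → ℝ} (hf : Continuous f) (h : ∃ᶠ n in atTop, ∃ x, 0 ≤ birkhoffSum T f (n + 1) x) :
    ∃ μ : ProbabilityMeasure X, MeasurePreserving T (μ : Measure X) μ ∧
      0 ≤ ∫ x, f x ∂(μ : Measure X) := by
  obtain ⟨n, hn, hx⟩ := exists_seq_forall_of_frequently h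
  choose x hx using hx
  let ν : ℕ → ProbabilityMeasure X := fun k => empiricalMeasure T (n k) (x k)
  let F : Ultrafilter ℕ := .of atTop
  obtain ⟨μ, -, hμ⟩ := isCompact_univ.ultrafilter_le_nhds' (F.map ν) univ_mem
  have hlim : Tendsto ν F (𝓝 μ) := hμ
  refine ⟨μ, measurePreserving_of_tendsto_empiricalMeasure hT
    (hn.mono_left (Ultrafilter.of_le _)) hlim, ?_⟩
  have hint := ProbabilityMeasure.tendsto_iff_forall_integral_tendsto.1 hlim
    (BoundedContinuousFunction.mkOfCompact ⟨f, hf⟩)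
  refine ge_of_tendsto' hint fun k => ?_
  rw [integral_empiricalMeasure (BoundedContinuousFunction.continuous _).stronglyMeasurable]
  exact smul_nonneg (by positivity) (hx k)

lemma exists_measurePreserving [CompactSpace X] [T2Space X] [Nonempty X] (hT : Continuous T) :
    ∃ μ : ProbabilityMeasure X, MeasurePreserving T (μ : Measure X) μ := by
  obtain ⟨μ, hμ, -⟩ := exists_measurePreserving_integral_nonneg hT (f := 0) continuous_zero
    (.of_forall fun n => ⟨Classical.arbitrary X, by simp [birkhoffSum]⟩)
  exact ⟨μ, hμ⟩

end KrylovBogoliubov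

section MaximalBirkhoffSums

variable {X G : Type*} {T : X → X}

lemma partialSups_birkhoffSum_succ [AddCommGroup G] [SemilatticeSup G] [AddLeftMono G]
    (f : X → G) (n : ℕ) (x : X) :
    partialSups (birkhoffSum T f · x) (n + 1) =
      0 ⊔ (f x + partialSups (birkhoffSum T f · (T x)) n) := by
  rw [partialSups_add_one', ← partialSups_const_add]
  simp [comp_def, birkhoffSum_succ']

variable [TopologicalSpace X]

/-- As the Birkhoff sums of length `N + 1` are nonpositive, the maximum over the lengths up to `N`
is also the maximum over the lengths up to `N + 1`. -/
lemma exists_continuous_eq_sup_add_comp [AddCommGroup G] [Lattice G] [AddLeftMono G]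
    [TopologicalSpace G] [ContinuousSup G] [ContinuousAdd G] (hT : Continuous T) {f : X → G}
    (hf : Continuous f) {N : ℕ} (hN : ∀ x, birkhoffSum T f (N + 1) x ≤ 0) :
    ∃ Q : X → G, Continuous Q ∧ ∀ x, Q x = 0 ⊔ (f x + Q (T x)) := by
  refine ⟨fun x => partialSups (birkhoffSum T f · x) N,
    .partialSups_apply fun k _ => continuous_birkhoffSum hT hf k, fun x => ?_⟩
  have hN' : birkhoffSum T f (N + 1) x ≤ partialSups (birkhoffSum T f · x) N :=
    (hN x).trans (le_partialSups_of_le (birkhoffSum T f · x) N.zero_le)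
  rw [← partialSups_birkhoffSum_succ, partialSups_add_one, sup_eq_left.2 hN']

/-- Since `Q = max 0 (1_A - 1_B + Q ∘ T)`, the function `1_A + Q ∘ T - Q` is the minimum of
`1_A + Q ∘ T` and `1_B`, hence an indicator function. -/
lemma exists_isClopen_indicator_eq_add_comp_sub (hT : Continuous T) {A B : Set X}
    (hA : IsClopen A) (hB : IsClopen B) {N : ℕ}
    (hN : ∀ x, birkhoffSum T (A.indicator 1 - B.indicator 1 : X → ℤ) (N + 1) x ≤ 0) :
    ∃ C, IsClopen C ∧ C ⊆ B ∧ ∃ Q : X → ℤ, Continuous Q ∧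
      ∀ x, C.indicator 1 x = A.indicator 1 x + Q (T x) - Q x := by
  obtain ⟨Q, hQ, hQmax⟩ := exists_continuous_eq_sup_add_comp hT
    ((continuous_indicator_one_of_isClopen hA).sub (continuous_indicator_one_of_isClopen hB)) hN
  have hQpos : IsClopen {x | 0 < Q (T x)} :=
    (isClopen_discrete (Ioi (0 : ℤ))).preimage (hQ.comp hT)
  refine ⟨B ∩ (A ∪ {x | 0 < Q (T x)}), hB.inter (hA.union hQpos), inter_subset_left, Q, hQ,
    fun x => ?_⟩
  have hx := hQmax x
  have hTx : 0 ≤ Q (T x) := hQmax (T x) ▸ le_sup_left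
  by_cases hxA : x ∈ A <;> by_cases hxB : x ∈ B <;> by_cases hpos : 0 < Q (T x) <;>
    simp [hxA, hxB, hpos] at hx ⊢ <;> omega

variable [CompactSpace X] [MeasurableSpace X] [BorelSpace X]

lemma exists_forall_birkhoffSum_nonpos [T2Space X] [HasOuterApproxClosed X] (hT : Continuous T)
    {A B : Set X} (hA : IsClopen A) (hB : IsClopen B)
    (hlt : ∀ μ : ProbabilityMeasure X, MeasurePreserving T (μ : Measure X) μ → μ A < μ B) :
    ∃ N, ∀ x, birkhoffSum T (A.indicator 1 - B.indicator 1 : X → ℤ) (N + 1) x ≤ 0 := by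
  by_contra! h
  have hcont {E : Set X} (hE : IsClopen E) : Continuous (E.indicator (1 : X → ℝ)) :=
    continuous_indicator_one_of_isClopen hE
  have hcast (n : ℕ) (x : X) :
      birkhoffSum T (A.indicator 1 - B.indicator 1 : X → ℝ) n x =
        (birkhoffSum T (A.indicator 1 - B.indicator 1 : X → ℤ) n x : ℤ) := by
    classical simp [birkhoffSum, Set.indicator_apply]
  obtain ⟨μ, hμ, hint⟩ := exists_measurePreserving_integral_nonneg hT ((hcont hA).sub (hcont hB))
    (.of_forall fun n => (h n).imp fun x hx => by rw [hcast]; exact_mod_cast hx.le)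
  have hAB : (μ A : ℝ) < μ B := hlt μ hμ
  have heq : ∫ x, (A.indicator 1 - B.indicator 1 : X → ℝ) x ∂(μ : Measure X) = μ A - μ B := by
    rw [integral_sub' (integrable_of_continuous (hcont hA) _)
      (integrable_of_continuous (hcont hB) _), integral_indicator_one hA.isOpen.measurableSet,
      integral_indicator_one hB.isOpen.measurableSet]
    rfl
  linarith

lemma measureReal_eq_of_indicator_eq_add_comp_sub {μ : Measure X} [IsFiniteMeasure μ]
    (hT : MeasurePreserving T μ μ) {A C : Set X} (hA : MeasurableSet A) (hC : MeasurableSet C)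
    {Q : X → ℤ} (hQ : Continuous Q)
    (h : ∀ x, C.indicator 1 x = A.indicator 1 x + Q (T x) - Q x) : μ.real C = μ.real A := by
  have hu : Integrable (fun x => (Q x : ℝ)) μ :=
    integrable_of_continuous (continuous_of_discreteTopology.comp hQ) μ
  have hcast (x : X) :
      C.indicator (1 : X → ℝ) x = A.indicator (1 : X → ℝ) x + Q (T x) - Q x := by
    classical simpa [Set.indicator_apply] using congrArg (Int.cast : ℤ → ℝ) (h x)
  rw [← integral_indicator_one hC, ← integral_indicator_one hA,
    ← integral_add_comp_sub hT (f := A.indicator 1)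
    ((integrable_const 1).indicator hA) hu]
  exact integral_congr_ae (.of_forall hcast)

lemma good_setOf_measurePreserving [T2Space X] [HasOuterApproxClosed X] (hT : Continuous T) :
    Good {μ : ProbabilityMeasure X | MeasurePreserving T (μ : Measure X) μ} := by
  intro A B hA hB hlt
  obtain ⟨N, hN⟩ := exists_forall_birkhoffSum_nonpos hT hA hB hlt
  obtain ⟨C, hC, hCB, Q, hQ, hCQ⟩ := exists_isClopen_indicator_eq_add_comp_sub hT hA hB hN
  refine ⟨C, hC, hCB, fun μ hμ => NNReal.eq ?_⟩
  simpa using measureReal_eq_of_indicator_eq_add_comp_sub hμ hA.isOpen.measurableSet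
    hC.isOpen.measurableSet hQ hCQ

end MaximalBirkhoffSums

section HittingTime

variable {X : Type*} {T : X → X} {A Y : Set X}

/-- The first time at which the forward orbit of `x` under `T` is in `Y`, with value `0` if the
orbit never visits `Y`. -/
noncomputable def hittingTime (T : X → X) (Y : Set X) (x : X) : ℕ :=
  sInf {n | T^[n] x ∈ Y}

lemma hittingTime_of_mem {x : X} (hx : x ∈ Y) : hittingTime T Y x = 0 :=
  Nat.sInf_eq_zero.2 (.inl hx)

lemma hittingTime_of_notMem {x : X} (hx : x ∉ Y) (h : ∃ n, T^[n] x ∈ Y) :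
    hittingTime T Y x = hittingTime T Y (T x) + 1 := by
  refine (Nat.sInf_add (n := 1) (p := fun n => T^[n] x ∈ Y) ?_).symm
  exact le_csInf h fun n hn => Nat.one_le_iff_ne_zero.2 fun h0 => hx (by simpa [h0] using hn)

lemma hittingTime_eq_iff {x : X} (h : ∃ n, T^[n] x ∈ Y) {m : ℕ} :
    hittingTime T Y x = m ↔ T^[m] x ∈ Y ∧ ∀ i < m, T^[i] x ∉ Y := by
  classical
  rw [hittingTime, Nat.sInf_def (s := {n | T^[n] x ∈ Y}) h]
  exact Nat.find_eq_iff h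

lemma continuous_hittingTime [TopologicalSpace X] (hT : Continuous T) (hY : IsClopen Y)
    (h : ∀ x, ∃ n, T^[n] x ∈ Y) : Continuous (hittingTime T Y) := by
  refine continuous_discrete_rng.2 fun m => ?_
  have hpre : hittingTime T Y ⁻¹' {m} = T^[m] ⁻¹' Y ∩ ⋂ i ∈ Iio m, T^[i] ⁻¹' Yᶜ := by
    ext x
    simp [hittingTime_eq_iff (h x)]
  rw [hpre]
  exact (hY.isOpen.preimage (hT.iterate m)).inter <| (finite_Iio m).isOpen_biInter fun i _ =>
    hY.compl.isOpen.preimage (hT.iterate i)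

/-- The number of visits of the forward orbit of `x` to `A` before it hits `Y`. -/
noncomputable def visitCount (T : X → X) (A Y : Set X) (x : X) : ℕ :=
  birkhoffSum T (A.indicator 1) (hittingTime T Y x) x

lemma visitCount_of_mem {x : X} (hx : x ∈ Y) : visitCount T A Y x = 0 := by
  simp [visitCount, hittingTime_of_mem hx]

lemma visitCount_of_notMem {x : X} (hx : x ∉ Y) (h : ∃ n, T^[n] x ∈ Y) :
    visitCount T A Y x = A.indicator 1 x + visitCount T A Y (T x) := by
  rw [visitCount, hittingTime_of_notMem hx h, birkhoffSum_succ', visitCount]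

lemma continuous_visitCount [TopologicalSpace X] (hT : Continuous T) (hA : IsClopen A)
    (hY : IsClopen Y) (h : ∀ x, ∃ n, T^[n] x ∈ Y) : Continuous (visitCount T A Y) := by
  refine continuous_iff_continuousAt.2 fun x => ?_
  have hτ : ∀ᶠ y in 𝓝 x, hittingTime T Y y = hittingTime T Y x :=
    (continuous_hittingTime hT hY h).continuousAt.eventually_mem 
      (mem_nhds_discrete.2 (mem_singleton _))
  refine (continuous_birkhoffSum hT (continuous_indicator_one_of_isClopen hA)
    (hittingTime T Y x)).continuousAt.congr ?_
  filter_upwards [hτ] with y hy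
  rw [visitCount, hy]

end HittingTime

section Divisibility

variable {X : Type*} [TopologicalSpace X] {T : X → X}

lemma add_one_mod_add_mul_ite (k n : ℕ) :
    (k + 1) % n + n * (if n ∣ k + 1 then 1 else 0) = k % n + 1 := by
  have hk := Nat.div_add_mod k n
  have hk1 := Nat.div_add_mod (k + 1) n
  rw [Nat.succ_div, mul_add] at hk1
  linarith

/-- `U` counts, modulo `n`, the visits to `A` before the marker `Y` is hit, and `B` consists of
every `n`-th of these visits. Off `Y` the first inequality is an equality, and a point of `Y`
contributes an error `U (T x) < n`. -/
lemma exists_isClopen_mul_indicator_le (hT : Continuous T) {A Y : Set X} (hA : IsClopen A)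
    (hY : IsClopen Y) (hhit : ∀ x, ∃ k, T^[k] x ∈ Y) {n : ℕ} (hn : 0 < n) :
    ∃ B, IsClopen B ∧ B ⊆ A ∧ ∃ U : X → ℕ, Continuous U ∧ ∀ x,
      n * B.indicator 1 x + U x ≤ A.indicator 1 x + U (T x) ∧
        A.indicator 1 x + U (T x) ≤ n * (B.indicator 1 x + Y.indicator 1 x) + U x := by
  let S := visitCount T A Y
  have hS : Continuous S := continuous_visitCount hT hA hY hhit
  have hdvd : IsClopen {x | n ∣ S x} := (isClopen_discrete {m | n ∣ m}).preimage hS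
  refine ⟨(A \ Y) ∩ {x | n ∣ S x}, (hA.diff hY).inter hdvd, inter_subset_left.trans sdiff_subset,
    fun x => S x % n, (continuous_of_discreteTopology (f := (· % n))).comp hS, fun x => ?_⟩
  by_cases hxY : x ∈ Y
  · have hlt : S (T x) % n < n := Nat.mod_lt _ hn
    have hx : S x = 0 := visitCount_of_mem hxY
    by_cases hxA : x ∈ A <;> simp [hxY, hxA, hx] <;> omega
  · have hx : S x = A.indicator 1 x + S (T x) := visitCount_of_notMem hxY (hhit x)
    by_cases hxA : x ∈ A
    · have hmod := add_one_mod_add_mul_ite (S (T x)) n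
      rw [Set.indicator_of_mem hxA, Pi.one_apply, add_comm] at hx
      by_cases hd : n ∣ S (T x) + 1 <;> simp [hxY, hxA, hx, hd] at hmod ⊢ <;> omega
    · rw [Set.indicator_of_notMem hxA, zero_add] at hx
      simp [hxY, hxA, hx]

lemma mul_measureReal_le_of_mul_indicator_le [CompactSpace X] [MeasurableSpace X] [BorelSpace X]
    {μ : Measure X} [IsFiniteMeasure μ] (hT : MeasurePreserving T μ μ) {A B Y : Set X}
    (hA : MeasurableSet A) (hB : MeasurableSet B) (hY : MeasurableSet Y) {n : ℕ} {U : X → ℕ}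
    (hU : Continuous U) (h : ∀ x, n * B.indicator 1 x + U x ≤ A.indicator 1 x + U (T x) ∧
      A.indicator 1 x + U (T x) ≤ n * (B.indicator 1 x + Y.indicator 1 x) + U x) :
    n * μ.real B ≤ μ.real A ∧ μ.real A ≤ n * (μ.real B + μ.real Y) := by
  have hind {E : Set X} (hE : MeasurableSet E) : Integrable (E.indicator (1 : X → ℝ)) μ :=
    (integrable_const 1).indicator hE
  have hcast (E : Set X) (x : X) : ((E.indicator 1 x : ℕ) : ℝ) = E.indicator 1 x := by
    classical simp [Set.indicator_apply]
  have hu : Integrable (fun x => (U x : ℝ)) μ :=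
    integrable_of_continuous (continuous_of_discreteTopology.comp hU) μ
  have hF : Integrable (fun x => A.indicator 1 x + (U (T x) : ℝ) - U x) μ :=
    ((hind hA).add (hT.integrable_comp_of_integrable hu)).sub hu
  have hFA : ∫ x, (A.indicator 1 x + (U (T x) : ℝ) - U x) ∂μ = μ.real A :=
    (integral_add_comp_sub hT (hind hA) hu).trans (integral_indicator_one hA)
  constructor
  · calc n * μ.real B = ∫ x, (n : ℝ) * B.indicator 1 x ∂μ := by
          rw [integral_const_mul, integral_indicator_one hB]
      _ ≤ ∫ x, (A.indicator 1 x + (U (T x) : ℝ) - U x) ∂μ := by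
          refine integral_mono ((hind hB).const_mul _) hF fun x => ?_
          have hx : ((n * B.indicator 1 x + U x : ℕ) : ℝ) ≤ (A.indicator 1 x + U (T x) : ℕ) :=
            mod_cast (h x).1
          push_cast [hcast] at hx
          linarith
      _ = μ.real A := hFA
  · calc μ.real A = ∫ x, (A.indicator 1 x + (U (T x) : ℝ) - U x) ∂μ := hFA.symm
      _ ≤ ∫ x, (n : ℝ) * (B.indicator 1 x + Y.indicator 1 x) ∂μ := by
          refine integral_mono hF (((hind hB).add (hind hY)).const_mul _) fun x => ?_
          have hx : ((A.indicator 1 x + U (T x) : ℕ) : ℝ) ≤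
              (n * (B.indicator 1 x + Y.indicator 1 x) + U x : ℕ) := mod_cast (h x).2
          push_cast [hcast] at hx
          linarith
      _ = n * (μ.real B + μ.real Y) := by
          rw [integral_const_mul, integral_add (hind hB) (hind hY), integral_indicator_one hB,
            integral_indicator_one hY]

end Divisibility

section Recurrence

variable {X : Type*} [TopologicalSpace X] {T : X → X} {x : X}

lemma eventually_smallSets_disjoint_preimage [T2Space X] (hT : ContinuousAt T x) (hx : T x ≠ x) :
    ∀ᶠ V in (𝓝 x).smallSets, Disjoint V (T ⁻¹' V) := by
  obtain ⟨V, W, hV, hW, hVW⟩ := t2_separation_nhds hx.symm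
  filter_upwards [eventually_smallSets_subset.2 (inter_mem hV (hT hW))] with S hS
  exact disjoint_left.2 fun y hy hTy => disjoint_left.1 hVW (hS hTy).1 (hS hy).2

variable [CompactSpace X] [T2Space X] [TotallyDisconnectedSpace X]

lemma exists_isClopen_disjoint_preimage_iterate (hT : Continuous T) (hx : x ∉ periodicPts T)
    (k : ℕ) : ∃ Y, IsClopen Y ∧ x ∈ Y ∧ ∀ m ∈ Ioo 0 k, Disjoint Y (T^[m] ⁻¹' Y) := by
  have hev : ∀ᶠ Y in (𝓝 x).smallSets, ∀ m ∈ Ioo 0 k, Disjoint Y (T^[m] ⁻¹' Y) :=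
    (eventually_all_finite (finite_Ioo 0 k)).2 fun m hm =>
      eventually_smallSets_disjoint_preimage (hT.iterate m).continuousAt fun h =>
        hx (mk_mem_periodicPts hm.1 h)
  obtain ⟨Y, ⟨hxY, hY⟩, hdisj⟩ := hev.exists_mem_basis_of_smallSets (nhds_basis_clopen x)
  exact ⟨Y, hY, hxY, hdisj⟩

/-- A set whose first `k` preimages are disjoint has measure at most `1 / k`. -/
lemma exists_isClopen_forall_measure_le [MeasurableSpace X] [BorelSpace X] (hT : Continuous T)
    (hx : x ∉ periodicPts T) {ε : ENNReal} (hε : ε ≠ 0) :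
    ∃ Y, IsClopen Y ∧ x ∈ Y ∧ ∀ (μ : Measure X) [IsProbabilityMeasure μ],
      MeasurePreserving T μ μ → μ Y ≤ ε := by
  obtain ⟨k, hk⟩ := ENNReal.exists_nat_mul_gt hε ENNReal.one_ne_top
  obtain ⟨Y, hY, hxY, hdisj⟩ := exists_isClopen_disjoint_preimage_iterate hT hx k
  refine ⟨Y, hY, hxY, fun μ _ hμ => ?_⟩
  by_contra! hlt
  have hvol : μ univ < k * μ Y :=
    calc μ univ = 1 := measure_univ
      _ < k * ε := hk
      _ ≤ k * μ Y := by gcongr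
  obtain ⟨y, hy, m, hm, hmy⟩ := hμ.exists_mem_iterate_mem_of_measure_univ_lt_mul_measure
    hY.isOpen.measurableSet.nullMeasurableSet hvol
  exact disjoint_left.1 (hdisj m hm) hy hmy

end Recurrence

section InvariantMeasures

variable {X : Type*} [MeasurableSpace X] {T : X → X}

lemma measure_singleton_eq_zero_of_notMem_periodicPts [MeasurableSingletonClass X]
    {μ : Measure X} [IsFiniteMeasure μ] (hμ : MeasurePreserving T μ μ) {x : X}
    (hx : x ∉ periodicPts T) : μ {x} = 0 := by
  by_contra h
  obtain ⟨_, rfl, m, hm, hreturn⟩ :=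
    hμ.exists_mem_iterate_mem (measurableSet_singleton x).nullMeasurableSet h
  exact hx (mk_mem_periodicPts (Nat.pos_of_ne_zero hm) hreturn)

lemma measure_ne_zero_of_forall_exists_iterate_mem {μ : Measure X} [NeZero μ]
    (hμ : MeasurePreserving T μ μ) {U : Set X} (hhit : ∀ x, ∃ n, T^[n] x ∈ U) : μ U ≠ 0 := by
  intro h0
  have hcover : ⋃ n, T^[n] ⁻¹' U = univ := iUnion_eq_univ_iff.2 hhit
  have hnull : μ (⋃ n, T^[n] ⁻¹' U) = 0 :=
    measure_iUnion_null fun n => (hμ.iterate n).quasiMeasurePreserving.preimage_null h0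
  exact NeZero.ne μ (Measure.measure_univ_eq_zero.1 (hcover ▸ hnull))

lemma probConvex_setOf_measurePreserving :
    ProbConvex {μ : ProbabilityMeasure X | MeasurePreserving T (μ : Measure X) μ} := by
  rintro _ ⟨μ, hμ, rfl⟩ _ ⟨ν, hν, rfl⟩ a b - - hab
  have hprob : IsProbabilityMeasure (a • (μ : Measure X) + b • (ν : Measure X)) :=
    ⟨by
    simp only [Measure.add_apply, Measure.smul_apply, measure_univ, ENNReal.smul_def, smul_eq_mul,
      mul_one]
    exact_mod_cast hab⟩
  exact ⟨⟨_, hprob⟩, (hμ.smul_measure a).add_measure (hν.smul_measure b), rfl⟩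

variable [TopologicalSpace X] [BorelSpace X]

lemma isCompact_setOf_measurePreserving [CompactSpace X] [T2Space X] [HasOuterApproxClosed X]
    (hT : Continuous T) :
    IsCompact {μ : ProbabilityMeasure X | MeasurePreserving T (μ : Measure X) μ} := by
  have hfix : {μ : ProbabilityMeasure X | MeasurePreserving T (μ : Measure X) μ} =
      {μ | μ.map hT.measurable.aemeasurable = μ} :=
    Set.ext fun μ => ⟨fun h => Subtype.ext h.map_eq, fun h =>
      ⟨hT.measurable, congrArg Subtype.val h⟩⟩
  rw [hfix]
  exact (isClosed_eq (ProbabilityMeasure.continuous_map hT) continuous_id).isCompact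

lemma approximatelyDivisible_setOf_measurePreserving [CompactSpace X] [T2Space X]
    [TotallyDisconnectedSpace X] (hT : Continuous T)
    (hmin : ∀ x, DenseRange fun n : ℕ => T^[n] x) {x : X} (hx : x ∉ periodicPts T) :
    ApproximatelyDivisible {μ : ProbabilityMeasure X | MeasurePreserving T (μ : Measure X) μ} := by
  intro A hA n hn ε hε
  have hn0 : (0 : ℝ) < n := by exact_mod_cast hn
  obtain ⟨Y, hY, hxY, hYε⟩ := exists_isClopen_forall_measure_le hT hx
    (ENNReal.ofReal_pos.2 (div_pos hε hn0)).ne'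
  obtain ⟨B, hB, hBA, U, hU, hBU⟩ := exists_isClopen_mul_indicator_le hT hA hY
    (fun y => (hmin y).exists_mem_open hY.isOpen ⟨x, hxY⟩) hn
  refine ⟨B, hB, hBA, fun μ hμ => ?_⟩
  have hYμ : n * (μ : Measure X).real Y ≤ ε := by
    rw [← le_div_iff₀' hn0]
    exact ENNReal.toReal_le_of_le_ofReal (div_pos hε hn0).le (hYε μ hμ)
  obtain ⟨hBle, hle⟩ := mul_measureReal_le_of_mul_indicator_le hμ hA.isOpen.measurableSet
    hB.isOpen.measurableSet hY.isOpen.measurableSet hU hBU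
  refine ⟨?_, hBle⟩
  change (μ : Measure X).real A - ε ≤ n * (μ : Measure X).real B
  linarith

end InvariantMeasures

section Minimality

variable {X : Type*} [TopologicalSpace X]

lemma notMem_periodicPts_of_denseRange [T1Space X] [PerfectSpace X] {T : X → X} {x : X}
    (h : DenseRange fun n : ℕ => T^[n] x) : x ∉ periodicPts T := by
  rintro ⟨p, hp, hper⟩
  have hfin : (range fun n : ℕ => T^[n] x).Finite :=
    ((finite_Iio p).image fun n => T^[n] x).subset <| range_subset_iff.2 fun n =>
      ⟨n % p, Nat.mod_lt n hp, hper.iterate_mod_apply n⟩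
  have huniv : (univ : Set X).Finite := by rwa [← h.closure_range, hfin.isClosed.closure_eq]
  exact infinite_of_mem_nhds x univ_mem huniv

lemma mapClusterPt_iterate_apply_iff (g : X ≃ₜ X) {x y : X} :
    MapClusterPt (g y) atTop (fun n : ℕ => g^[n] x) ↔
      MapClusterPt y atTop (fun n : ℕ => g^[n] x) := by
  have hshift : (fun n : ℕ => g^[n] x) ∘ (· + 1) = g ∘ fun n : ℕ => g^[n] x :=
    funext fun n => iterate_succ_apply' g n x
  rw [← map_add_atTop_eq_nat 1, ← mapClusterPt_comp, hshift, mapClusterPt_comp,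
    map_add_atTop_eq_nat, g.isInducing.mapClusterPt_iff, MapClusterPt]

/-- The limit points of a forward orbit form a nonempty set which is invariant under `g` and
`g⁻¹`, so it contains a dense two-sided orbit. -/
lemma IsMinimal.denseRange_iterate [CompactSpace X] {g : X ≃ₜ X} (hg : IsMinimal g) (x : X) :
    DenseRange fun n : ℕ => g^[n] x := by
  obtain ⟨y, hy⟩ := exists_clusterPt_of_compactSpace (map (fun n : ℕ => g^[n] x) atTop)
  have hinv : BijOn g.toEquiv {z | MapClusterPt z atTop fun n : ℕ => g^[n] x}
      {z | MapClusterPt z atTop fun n : ℕ => g^[n] x} :=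
    g.toEquiv.bijOn fun _ => mapClusterPt_iterate_apply_iff g
  refine dense_closure.1 ((hg y).mono ?_)
  rintro _ ⟨n, rfl⟩
  exact isClosed_closure.mem_of_mapClusterPt ((hinv.perm_zpow n).mapsTo hy)
    (.of_forall fun k => subset_closure (mem_range_self k))

lemma setOf_preserves_eq [MeasurableSpace X] [BorelSpace X] (g : X ≃ₜ X) :
    {μ : ProbabilityMeasure X | Preserves g μ} =
      {μ : ProbabilityMeasure X | MeasurePreserving g (μ : Measure X) μ} :=
  Set.ext fun _ => ⟨fun h => ⟨g.continuous.measurable, h⟩, fun h => h.map_eq⟩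

end Minimality

end DynSimplex

theorem invariantMeasures_of_minimal_is_dynamicalSimplex_general {X : Type*} [TopologicalSpace X]
    [CompactSpace X] [T2Space X] [HasOuterApproxClosed X] [TotallyDisconnectedSpace X]
    [PerfectSpace X] [Nonempty X] [MeasurableSpace X] [BorelSpace X] {T : X → X}
    (hT : Continuous T) (hmin : ∀ x, DenseRange fun n : ℕ => T^[n] x) :
    DynSimplex.DynamicalSimplex
      {μ : ProbabilityMeasure X | MeasurePreserving T (μ : Measure X) μ} := by
  have hper (x : X) : x ∉ Function.periodicPts T :=
    DynSimplex.notMem_periodicPts_of_denseRange (hmin x)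
  refine ⟨DynSimplex.exists_measurePreserving hT, DynSimplex.isCompact_setOf_measurePreserving hT,
    DynSimplex.probConvex_setOf_measurePreserving, fun μ hμ => ⟨fun x => ?_, fun U hU hne => ?_⟩,
    DynSimplex.good_setOf_measurePreserving hT,
    DynSimplex.approximatelyDivisible_setOf_measurePreserving hT hmin
      (hper (Classical.arbitrary X))⟩
  · exact (μ.null_iff_toMeasure_null {x}).2
      (DynSimplex.measure_singleton_eq_zero_of_notMem_periodicPts hμ (hper x))
  · exact pos_iff_ne_zero.2 ((μ.null_iff_toMeasure_null U).not.2
      (DynSimplex.measure_ne_zero_of_forall_exists_iterate_mem hμ fun x =>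
        (hmin x).exists_mem_open hU hne))

theorem invariantMeasures_of_minimal_is_dynamicalSimplex
    {X : Type*} [TopologicalSpace X] [CompactSpace X]
    [TopologicalSpace.MetrizableSpace X] [TotallyDisconnectedSpace X] [PerfectSpace X]
    [Nonempty X] [MeasurableSpace X] [BorelSpace X]
    (g : X ≃ₜ X) (hg : DynSimplex.IsMinimal g) :
    DynSimplex.DynamicalSimplex
        {μ : MeasureTheory.ProbabilityMeasure X | DynSimplex.Preserves g μ} ∧
      DynSimplex.ApproximatelyDivisible
        {μ : MeasureTheory.ProbabilityMeasure X | DynSimplex.Preserves g μ} := by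
  have hK := invariantMeasures_of_minimal_is_dynamicalSimplex_general g.continuous
    hg.denseRange_iterate
  rw [← DynSimplex.setOf_preserves_eq g] at hK
  exact ⟨hK, hK.2.2.2.2.2⟩
end

section
/- Let X be a Cantor space and K a good nonempty set of Borel probability measures on X, each of which has full support. If U and V are clopen subsets of X with U ∼_K V, then there exists a homeomorphism g of X with g_*μ = μ for every μ ∈ K and g(U) = V. -/
/-!
The proof is a back-and-forth argument. Let `s` be a finite set of pairs `(u, v)` of continuous maps
`X → Bool` such that, for every `μ ∈ K`, the random vectors formed by the first components and by
the second components have the same law. Given a further `w : X → Bool`, goodness of `K`, applied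
inside each atom of the partition defined by the second components, provides a `w'` for which
`s ∪ {(w, w')}` has the same property; full support gives the strict inequalities which goodness
requires. Symmetrically, `w` can be added as a second component. Since `X` has only countably many
clopen sets, the singleton consisting of the pair of indicators of `U` and `V` is contained in a set
`S` of pairs with equal laws in which every `w` occurs on both sides.

The first and the second components then define two embeddings `f` and `h` of `X` into `S → Bool`
having the same law under each `μ ∈ K`. As `μ` has full support, the image of `f` is the support of
that law, and so is the image of `h`. Hence `g = h⁻¹ ∘ f` is a homeomorphism of `X`. It preserves
each `μ ∈ K`, and it maps `U` to `V` because the pair of their indicators belongs to `S`.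
-/

open MeasureTheory

open Set Topology ProbabilityTheory

namespace DynSimplex

section General

section Laws

variable {Ω Ω' α : Type*} [MeasurableSpace Ω] [MeasurableSpace Ω'] [MeasurableSpace α]
  {μ : Measure Ω} {ν : Measure Ω'}

lemma identDistrib_prodMk_bool [Countable α] [MeasurableSingletonClass α] [IsFiniteMeasure μ]
    {f : Ω → α} {h : Ω' → α} {u : Ω → Bool} {v : Ω' → Bool} (hfh : IdentDistrib f h μ ν)
    (hu : Measurable u) (hv : Measurable v)
    (huv : ∀ a, μ (f ⁻¹' {a} ∩ u ⁻¹' {true}) = ν (h ⁻¹' {a} ∩ v ⁻¹' {true})) :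
    IdentDistrib (fun x => (f x, u x)) (fun y => (h y, v y)) μ ν := by
  have hf := hfh.aemeasurable_fst.prodMk hu.aemeasurable
  have hh := hfh.aemeasurable_snd.prodMk hv.aemeasurable
  refine ⟨hf, hh, Measure.ext_of_singleton fun ⟨a, b⟩ => ?_⟩
  rw [Measure.map_apply_of_aemeasurable hf (measurableSet_singleton _),
    Measure.map_apply_of_aemeasurable hh (measurableSet_singleton _),
    ← singleton_prod_singleton, mk_preimage_prod, mk_preimage_prod]
  cases b with
  | true => exact huv a
  | false =>
    have compl_true : ({false} : Set Bool) = {true}ᶜ := by ext b; simp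
    have hsum : μ (f ⁻¹' {a} ∩ u ⁻¹' {true}) + μ (f ⁻¹' {a} \ u ⁻¹' {true})
        = μ (f ⁻¹' {a} ∩ u ⁻¹' {true}) + ν (h ⁻¹' {a} \ v ⁻¹' {true}) := by
      rw [measure_inter_add_sdiff _ (hu (measurableSet_singleton true)), huv,
        measure_inter_add_sdiff _ (hv (measurableSet_singleton true)),
        hfh.measure_mem_eq (measurableSet_singleton a)]
    rw [compl_true, preimage_compl, preimage_compl, ← sdiff_eq, ← sdiff_eq]
    exact (ENNReal.add_right_inj (measure_ne_top _ _)).1 hsum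

lemma measurePreserving_of_identDistrib_of_comp_eq {f : Ω → α} {h : Ω' → α} {g : Ω → Ω'}
    (hfh : IdentDistrib f h μ ν) (hh : MeasurableEmbedding h) (hg : Measurable g)
    (hgf : h ∘ g = f) : MeasurePreserving g μ ν := by
  refine ⟨hg, Measure.ext fun s hs => ?_⟩
  calc μ.map g s = μ (f ⁻¹' (h '' s)) := by
        rw [Measure.map_apply hg hs, ← hgf, preimage_comp, preimage_image_eq s hh.injective]
    _ = ν (h ⁻¹' (h '' s)) := hfh.measure_mem_eq (hh.measurableSet_image.2 hs)
    _ = ν s := by rw [preimage_image_eq s hh.injective]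

lemma range_subset_range_of_identDistrib [TopologicalSpace Ω] [TopologicalSpace α]
    [OpensMeasurableSpace α] [μ.IsOpenPosMeasure] {f : Ω → α} {h : Ω' → α}
    (hfh : IdentDistrib f h μ ν) (hf : Continuous f) (hh : IsClosed (range h)) :
    range f ⊆ range h := by
  have hnull : μ (f ⁻¹' (range h)ᶜ) = 0 := by
    rw [hfh.measure_mem_eq hh.measurableSet.compl, preimage_compl, preimage_range, compl_univ,
      measure_empty]
  rintro _ ⟨x, rfl⟩
  by_contra hx
  exact (hh.isOpen_compl.preimage hf).measure_ne_zero μ ⟨x, hx⟩ hnull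

end Laws

lemma exists_homeomorph_comp_eq {X Y Z : Type*} [TopologicalSpace X] [TopologicalSpace Y]
    [TopologicalSpace Z] {f : X → Z} {h : Y → Z} (hf : IsEmbedding f) (hh : IsEmbedding h)
    (hfh : range f = range h) : ∃ g : X ≃ₜ Y, h ∘ g = f := by
  refine ⟨hf.toHomeomorph.trans ((Homeomorph.setCongr hfh).trans hh.toHomeomorph.symm), ?_⟩
  ext x
  exact congrArg Subtype.val (hh.toHomeomorph.apply_symm_apply ⟨f x, hfh ▸ mem_range_self x⟩)

lemma continuous_apply_of_discrete {X α β : Type*} [TopologicalSpace X] [TopologicalSpace α]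
    [DiscreteTopology α] [TopologicalSpace β] {f : X → α} {v : α → X → β} (hf : Continuous f)
    (hv : ∀ a, Continuous (v a)) : Continuous fun x => v (f x) x :=
  (continuous_prod_of_discrete_left (f := Function.uncurry v) |>.2 hv).comp
    (hf.prodMk continuous_id)

/-- The indicator function of a clopen set, as a continuous map to `Bool`. It identifies the clopen
subsets of `X` with the elements of `C(X, Bool)`. -/
noncomputable def boolIndicatorMap {X : Type*} [TopologicalSpace X] {U : Set X} (hU : IsClopen U) :
    C(X, Bool) :=
  ⟨U.boolIndicator, (continuous_boolIndicator_iff_isClopen U).2 hU⟩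

lemma boolIndicatorMap_preimage_true {X : Type*} [TopologicalSpace X] {U : Set X}
    (hU : IsClopen U) : boolIndicatorMap hU ⁻¹' {true} = U :=
  preimage_boolIndicator_true U

section ZeroDimensional

variable {X : Type*} [TopologicalSpace X] [CompactSpace X] [T2Space X] [TotallyDisconnectedSpace X]

instance countable_continuousMap_bool [SecondCountableTopology X] : Countable C(X, Bool) := by
  have := TopologicalSpace.Clopens.countable_iff_secondCountable.2 ‹SecondCountableTopology X›
  let trueSet (u : C(X, Bool)) : TopologicalSpace.Clopens X :=
    ⟨u ⁻¹' {true}, (isClopen_discrete {true}).preimage u.continuous⟩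
  refine Function.Injective.countable (f := trueSet) fun u v huv => ContinuousMap.ext fun x => ?_
  exact Bool.eq_iff_iff.2 (Set.ext_iff.1 (congrArg SetLike.coe huv) x)

lemma isClosedEmbedding_of_surjective {ι : Type*} {u : ι → C(X, Bool)}
    (hu : Function.Surjective u) : IsClosedEmbedding fun x i => u i x := by
  refine (continuous_pi fun i => (u i).continuous).isClosedEmbedding fun x y hxy => ?_
  by_contra hne
  obtain ⟨C, hC, hx, hy⟩ := exists_isClopen_of_totally_separated hne
  obtain ⟨i, hi⟩ := hu (boolIndicatorMap hC)
  have hCxy : u i x = u i y := congrFun hxy i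
  rw [← boolIndicatorMap_preimage_true hC, ← hi] at hx hy
  exact hy (hCxy.symm.trans hx)

end ZeroDimensional

end General

section SameLaw

variable {Ω α β : Type*} [MeasurableSpace Ω] [MeasurableSpace α] [MeasurableSpace β]
  {K : Set (ProbabilityMeasure Ω)} {f h : Ω → α}

/-- The maps `f` and `h` have the same law under every measure of `K`. For maps into a countable
discrete space this says that the fibres of `f` and `h` over each point are `K`-equivalent. -/
def SameLaw (K : Set (ProbabilityMeasure Ω)) (f h : Ω → α) : Prop :=
  ∀ μ ∈ K, IdentDistrib f h (μ : Measure Ω) μ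

lemma SameLaw.symm (H : SameLaw K f h) : SameLaw K h f :=
  fun μ hμ => (H μ hμ).symm

lemma SameLaw.comp (H : SameLaw K f h) {φ : α → β} (hφ : Measurable φ) :
    SameLaw K (φ ∘ f) (φ ∘ h) :=
  fun μ hμ => (H μ hμ).comp hφ

lemma SameLaw.apply_preimage_eq (H : SameLaw K f h) {s : Set α} (hs : MeasurableSet s)
    {μ : ProbabilityMeasure Ω} (hμ : μ ∈ K) : μ (f ⁻¹' s) = μ (h ⁻¹' s) :=
  congrArg ENNReal.toNNReal ((H μ hμ).measure_mem_eq hs)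

end SameLaw

section Measures

variable {X : Type*} [TopologicalSpace X] [MeasurableSpace X]

lemma FullSupport.isOpenPosMeasure {μ : ProbabilityMeasure X} (hμ : FullSupport μ) :
    (μ : Measure X).IsOpenPosMeasure :=
  ⟨fun U hU hne => (ProbabilityMeasure.null_iff_toMeasure_null μ U).not.1 (hμ U hU hne).ne'⟩

lemma FullSupport.apply_lt_apply [OpensMeasurableSpace X] {μ : ProbabilityMeasure X}
    (hμ : FullSupport μ) {C A : Set X} (hC : IsClosed C) (hA : IsOpen A) (hCA : C ⊂ A) :
    μ C < μ A := by
  have hsum : μ A = μ C + μ (A \ C) := by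
    have h := measure_add_sdiff (μ := (μ : Measure X)) hC.measurableSet.nullMeasurableSet A
    rw [union_eq_self_of_subset_left hCA.subset] at h
    simp only [← ProbabilityMeasure.ennreal_coeFn_eq_coeFn_toMeasure] at h
    exact_mod_cast h.symm
  rw [hsum]
  exact lt_add_of_pos_right _ (hμ _ (hA.sdiff hC) (nonempty_of_ssubset hCA))

variable {K : Set (ProbabilityMeasure X)}

lemma Good.exists_isClopen_subset [OpensMeasurableSpace X] (hgood : Good K)
    (hsupp : ∀ μ ∈ K, FullSupport μ) {A B C : Set X} (hA : IsClopen A) (hB : IsClopen B)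
    (hC : IsClopen C) (hCA : C ⊆ A) (hAB : ∀ μ ∈ K, μ A = μ B) :
    ∃ D, IsClopen D ∧ D ⊆ B ∧ ∀ μ ∈ K, μ D = μ C := by
  rcases hCA.eq_or_ssubset with rfl | hCA
  · exact ⟨B, hB, subset_rfl, fun μ hμ => (hAB μ hμ).symm⟩
  · exact hgood C B hC hB fun μ hμ =>
      ((hsupp μ hμ).apply_lt_apply hC.isClosed hA.isOpen hCA).trans_eq (hAB μ hμ)

section Extension

variable [OpensMeasurableSpace X] {α : Type*} [MeasurableSpace α] [Countable α]
  [MeasurableSingletonClass α] {f h : X → α}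

lemma SameLaw.prodMk_bool (H : SameLaw K f h) {u v : X → Bool} (hu : Continuous u)
    (hv : Continuous v)
    (huv : ∀ a, ∀ μ ∈ K, μ (f ⁻¹' {a} ∩ u ⁻¹' {true}) = μ (h ⁻¹' {a} ∩ v ⁻¹' {true})) :
    SameLaw K (fun x => (f x, u x)) (fun x => (h x, v x)) := by
  refine fun μ hμ => identDistrib_prodMk_bool (H μ hμ) hu.measurable hv.measurable fun a => ?_
  simp only [← ProbabilityMeasure.ennreal_coeFn_eq_coeFn_toMeasure, huv a μ hμ]

lemma SameLaw.exists_prodMk_bool [TopologicalSpace α] [DiscreteTopology α] (H : SameLaw K f h)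
    (hgood : Good K) (hsupp : ∀ μ ∈ K, FullSupport μ) (hf : Continuous f) (hh : Continuous h)
    (u : C(X, Bool)) :
    ∃ v : C(X, Bool), SameLaw K (fun x => (f x, u x)) (fun x => (h x, v x)) := by
  have hfib {k : X → α} (hk : Continuous k) (a : α) : IsClopen (k ⁻¹' {a}) :=
    (isClopen_discrete {a}).preimage hk
  choose D hD hDh hDeq using fun a => hgood.exists_isClopen_subset hsupp (hfib hf a) (hfib hh a)
    ((hfib hf a).inter ((isClopen_discrete {true}).preimage u.continuous)) inter_subset_left
    (fun μ hμ => H.apply_preimage_eq (measurableSet_singleton a) hμ)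
  let v : C(X, Bool) := ⟨fun x => (D (h x)).boolIndicator x,
    continuous_apply_of_discrete (v := fun a => (D a).boolIndicator) hh
      fun a => (continuous_boolIndicator_iff_isClopen _).2 (hD a)⟩
  have hvD (a : α) : h ⁻¹' {a} ∩ v ⁻¹' {true} = D a := by
    ext x
    have hmem : v x = true ↔ x ∈ D (h x) := (mem_iff_boolIndicator _ x).symm
    simp only [mem_inter_iff, mem_preimage, mem_singleton_iff, hmem]
    exact ⟨fun ⟨hx, hxD⟩ => hx ▸ hxD, fun hx => have hxa : h x = a := hDh a hx; ⟨hxa, hxa ▸ hx⟩⟩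
  exact ⟨v, H.prodMk_bool u.continuous v.continuous fun a μ hμ => by rw [hvD, hDeq a μ hμ]⟩

end Extension

/-- A `K`-matching is a relation between continuous maps `X → Bool`, i.e. between clopen sets, whose
first and second components have the same joint law under every measure of `K`. The finite
`K`-matchings are the stages of the back-and-forth construction. -/
def IsMatching (K : Set (ProbabilityMeasure X)) (S : Set (C(X, Bool) × C(X, Bool))) : Prop :=
  SameLaw K (fun x (p : S) => p.1.1 x) (fun x (p : S) => p.1.2 x)

section IsMatching

variable {S T : Set (C(X, Bool) × C(X, Bool))}

lemma IsMatching.mono (hT : IsMatching K T) (hST : S ⊆ T) : IsMatching K S :=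
  hT.comp (φ := fun y p => y (inclusion hST p)) (by fun_prop)

lemma isMatching_insert {u v : C(X, Bool)}
    (H : SameLaw K (fun x => (fun p : S => p.1.1 x, u x)) (fun x => (fun p : S => p.1.2 x, v x))) :
    IsMatching K (insert (u, v) S) := by
  classical
  let φ (y : (S → Bool) × Bool) (p : (insert (u, v) S : Set _)) : Bool :=
    if hp : p.1 ∈ S then y.1 ⟨p, hp⟩ else y.2
  have hφ : Measurable φ := measurable_pi_lambda _ fun p => by
    by_cases hp : p.1 ∈ S <;> simp only [φ, hp, dite_true, dite_false] <;> fun_prop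
  change SameLaw K _ _
  convert H.comp hφ using 1
  all_goals
    ext x ⟨p, hp⟩
    by_cases hpS : p ∈ S
    · simp [φ, hpS]
    · obtain rfl := hp.resolve_right hpS
      simp [φ, hpS]

variable [OpensMeasurableSpace X]

lemma isMatching_empty : IsMatching K (∅ : Set (C(X, Bool) × C(X, Bool))) := by
  intro μ _
  convert IdentDistrib.refl (f := fun (x : X) (p : (∅ : Set (C(X, Bool) × C(X, Bool)))) => p.1.1 x)
    (μ := (μ : Measure X)) (by fun_prop) using 1
  exact funext fun x => Subsingleton.elim _ _

lemma isMatching_of_forall_finset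
    (hS : ∀ s : Finset (C(X, Bool) × C(X, Bool)), (s : Set _) ⊆ S → IsMatching K (s : Set _)) :
    IsMatching K S := by
  refine fun μ hμ => (identDistrib_iff_forall_finset_identDistrib
    (X := fun (p : S) x => p.1.1 x) (Y := fun (p : S) x => p.1.2 x)
    (measurable_pi_lambda _ fun p => p.1.1.continuous.measurable).aemeasurable
    (measurable_pi_lambda _ fun p => p.1.2.continuous.measurable).aemeasurable).2 fun I => ?_
  let φ (y : I.map (Function.Embedding.subtype _) → Bool) (i : I) : Bool :=
    y ⟨i.1, Finset.mem_map_of_mem _ i.2⟩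
  have hφ : Measurable φ := by fun_prop
  exact (hS (I.map (.subtype _)) (by simp) μ hμ).comp hφ

lemma IsMatching.exists_insert_left (hS : IsMatching K S) (hfin : S.Finite) (hgood : Good K)
    (hsupp : ∀ μ ∈ K, FullSupport μ) (u : C(X, Bool)) : ∃ v, IsMatching K (insert (u, v) S) := by
  have := hfin.to_subtype
  obtain ⟨v, hv⟩ := SameLaw.exists_prodMk_bool hS hgood hsupp (by fun_prop) (by fun_prop) u
  exact ⟨v, isMatching_insert hv⟩

lemma IsMatching.exists_insert_right (hS : IsMatching K S) (hfin : S.Finite) (hgood : Good K)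
    (hsupp : ∀ μ ∈ K, FullSupport μ) (v : C(X, Bool)) : ∃ u, IsMatching K (insert (u, v) S) := by
  have := hfin.to_subtype
  obtain ⟨u, hu⟩ := (SameLaw.symm hS).exists_prodMk_bool hgood hsupp (by fun_prop) (by fun_prop) v
  exact ⟨u, isMatching_insert hu.symm⟩

lemma isMatching_singleton_boolIndicatorMap {U V : Set X} (hU : IsClopen U) (hV : IsClopen V)
    (hUV : ∀ μ ∈ K, μ U = μ V) : IsMatching K {(boolIndicatorMap hU, boolIndicatorMap hV)} := by
  rw [← insert_empty_eq]
  refine isMatching_insert (SameLaw.prodMk_bool isMatching_empty (map_continuous _)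
    (map_continuous _) fun a μ hμ => ?_)
  have preimage_eq_univ (k : X → (∅ : Set (C(X, Bool) × C(X, Bool))) → Bool) : k ⁻¹' {a} = univ :=
    eq_univ_of_forall fun x => Subsingleton.elim (k x) a
  rw [preimage_eq_univ, preimage_eq_univ, univ_inter, univ_inter, boolIndicatorMap_preimage_true,
    boolIndicatorMap_preimage_true, hUV μ hμ]

lemma IsMatching.exists_total [Countable C(X, Bool)] (hS : IsMatching K S) (hfin : S.Finite)
    (hgood : Good K) (hsupp : ∀ μ ∈ K, FullSupport μ) :
    ∃ T, S ⊆ T ∧ IsMatching K T ∧ (∀ u, ∃ v, (u, v) ∈ T) ∧ ∀ v, ∃ u, (u, v) ∈ T := by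
  let P := {s : Set (C(X, Bool) × C(X, Bool)) // s.Finite ∧ IsMatching K s}
  let meetsLeft (u : C(X, Bool)) : Order.Cofinal P := {
    carrier := {s | ∃ v, (u, v) ∈ s.1}
    isCofinal := fun ⟨s, hs, hsK⟩ => by
      obtain ⟨v, hv⟩ := hsK.exists_insert_left hs hgood hsupp u
      exact ⟨⟨_, hs.insert _, hv⟩, ⟨v, mem_insert _ _⟩, subset_insert _ _⟩ }
  let meetsRight (v : C(X, Bool)) : Order.Cofinal P := {
    carrier := {s | ∃ u, (u, v) ∈ s.1}
    isCofinal := fun ⟨s, hs, hsK⟩ => by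
      obtain ⟨u, hu⟩ := hsK.exists_insert_right hs hgood hsupp v
      exact ⟨⟨_, hs.insert _, hu⟩, ⟨u, mem_insert _ _⟩, subset_insert _ _⟩ }
  have := Encodable.ofCountable C(X, Bool)
  let 𝒟 : C(X, Bool) ⊕ C(X, Bool) → Order.Cofinal P := Sum.elim meetsLeft meetsRight
  let I : Order.Ideal P := Order.idealOfCofinals ⟨S, hfin, hS⟩ 𝒟
  have hI (i) : ∃ s ∈ 𝒟 i, s ∈ I := Order.cofinal_meets_idealOfCofinals _ 𝒟 i
  refine ⟨⋃ s ∈ I, s.1, fun p hp => mem_biUnion (Order.mem_idealOfCofinals ⟨S, hfin, hS⟩ 𝒟) hp,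
    isMatching_of_forall_finset fun t ht => ?_, fun u => ?_, fun v => ?_⟩
  · obtain ⟨s, -, hts⟩ := DirectedOn.exists_mem_subset_of_finset_subset_biUnion
      I.nonempty I.directed ht
    exact s.2.2.mono hts
  · obtain ⟨s, ⟨v, hv⟩, hs⟩ := hI (.inl u)
    exact ⟨v, mem_biUnion hs hv⟩
  · obtain ⟨s, ⟨u, hu⟩, hs⟩ := hI (.inr v)
    exact ⟨u, mem_biUnion hs hu⟩

end IsMatching

end Measures

lemma IsMatching.exists_homeomorph {X : Type*} [TopologicalSpace X] [CompactSpace X]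
    [T2Space X] [TotallyDisconnectedSpace X] [SecondCountableTopology X] [MeasurableSpace X]
    [BorelSpace X] {K : Set (ProbabilityMeasure X)} (hne : K.Nonempty)
    (hsupp : ∀ μ ∈ K, FullSupport μ) {S : Set (C(X, Bool) × C(X, Bool))} (hS : IsMatching K S)
    (hleft : ∀ u, ∃ v, (u, v) ∈ S) (hright : ∀ v, ∃ u, (u, v) ∈ S) :
    ∃ g : X ≃ₜ X, PreservesAll K g ∧ ∀ p ∈ S, ∀ x, p.2 (g x) = p.1 x := by
  have hf : IsClosedEmbedding fun x (p : S) => p.1.1 x :=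
    isClosedEmbedding_of_surjective fun u => let ⟨v, hv⟩ := hleft u; ⟨⟨(u, v), hv⟩, rfl⟩
  have hh : IsClosedEmbedding fun x (p : S) => p.1.2 x :=
    isClosedEmbedding_of_surjective fun v => let ⟨u, hu⟩ := hright v; ⟨⟨(u, v), hu⟩, rfl⟩
  obtain ⟨μ₀, hμ₀⟩ := hne
  have := (hsupp μ₀ hμ₀).isOpenPosMeasure
  have hrange := (range_subset_range_of_identDistrib (hS μ₀ hμ₀) hf.continuous
    hh.isClosed_range).antisymm (range_subset_range_of_identDistrib (hS μ₀ hμ₀).symm hh.continuous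
      hf.isClosed_range)
  obtain ⟨g, hg⟩ := exists_homeomorph_comp_eq hf.isEmbedding hh.isEmbedding hrange
  refine ⟨g, fun μ hμ => ?_, fun p hp x => congrFun (congrFun hg x) ⟨p, hp⟩⟩
  exact (measurePreserving_of_identDistrib_of_comp_eq (hS μ hμ) hh.measurableEmbedding
    g.continuous.measurable hg).map_eq

end DynSimplex

theorem exists_measurePreserving_homeomorph_mapsTo_general
    {X : Type*} [TopologicalSpace X] [CompactSpace X]
    [TopologicalSpace.MetrizableSpace X] [TotallyDisconnectedSpace X]
    [MeasurableSpace X] [BorelSpace X]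
    (K : Set (MeasureTheory.ProbabilityMeasure X)) (hne : K.Nonempty)
    (hgood : DynSimplex.Good K) (hsupp : ∀ μ ∈ K, DynSimplex.FullSupport μ)
    (U V : Set X) (hU : IsClopen U) (hV : IsClopen V)
    (hUV : ∀ μ ∈ K, μ U = μ V) :
    ∃ g : X ≃ₜ X, DynSimplex.PreservesAll K g ∧ g '' U = V := by
  have : SecondCountableTopology X := by
    let _ := TopologicalSpace.metrizableSpaceMetric X
    infer_instance
  have hmatch := DynSimplex.isMatching_singleton_boolIndicatorMap hU hV hUV
  obtain ⟨S, hUVS, hS, hleft, hright⟩ := hmatch.exists_total (finite_singleton _) hgood hsupp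
  obtain ⟨g, hgK, hgS⟩ := hS.exists_homeomorph hne hsupp hleft hright
  have hpre : g ⁻¹' V = U := by
    rw [← DynSimplex.boolIndicatorMap_preimage_true hU,
      ← DynSimplex.boolIndicatorMap_preimage_true hV]
    ext x
    simp [hgS _ (singleton_subset_iff.1 hUVS) x]
  exact ⟨g, hgK, by rw [← hpre, image_preimage_eq _ g.surjective]⟩

theorem exists_measurePreserving_homeomorph_mapsTo
    {X : Type*} [TopologicalSpace X] [CompactSpace X]
    [TopologicalSpace.MetrizableSpace X] [TotallyDisconnectedSpace X] [PerfectSpace X]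
    [Nonempty X] [MeasurableSpace X] [BorelSpace X]
    (K : Set (MeasureTheory.ProbabilityMeasure X)) (hne : K.Nonempty)
    (hgood : DynSimplex.Good K) (hsupp : ∀ μ ∈ K, DynSimplex.FullSupport μ)
    (U V : Set X) (hU : IsClopen U) (hV : IsClopen V)
    (hUV : ∀ μ ∈ K, μ U = μ V) :
    ∃ g : X ≃ₜ X, DynSimplex.PreservesAll K g ∧ g '' U = V :=
  exists_measurePreserving_homeomorph_mapsTo_general K hne hgood hsupp U V hU hV hUV
end

section
/- Let X be a Cantor space, K a dynamical simplex on X, and G the group of all homeomorphisms of X preserving every measure in K. If g ∈ G is K-saturated, then the topological full group [[g]] is dense in G (with respect to the topology of uniform convergence on Homeo(X)). -/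
/-!
Let `h` preserve every measure of `K`. Since `X` is profinite, it suffices to match `h` after
composing with a locally constant map `p` to a finite set. The clopen sets `h⁻¹(p⁻¹{i})` and
`p⁻¹{i}` are `K`-equivalent, so saturation provides `φ i ∈ [[g]]` mapping the former onto the
latter. Gluing the restrictions of the `φ i` to these pieces gives `f ∈ [[g]]` with
`p ∘ f = p ∘ h`.
-/

open MeasureTheory

namespace DynSimplex

section LocallyConstant

variable {X Y ι : Type*} [TopologicalSpace X] [TopologicalSpace Y]

lemma continuous_apply_of_isLocallyConstant {p : X → ι} (hp : IsLocallyConstant p)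
    {F : ι → X → Y} (hF : ∀ i, Continuous (F i)) : Continuous fun x => F (p x) x := by
  let _ : TopologicalSpace ι := ⊥
  have : DiscreteTopology ι := ⟨rfl⟩
  exact (continuous_prod_of_discrete_left (f := fun z : ι × X => F z.1 z.2)).2 hF |>.comp
    (hp.continuous.prodMk continuous_id)

lemma mem_closure_of_forall_isLocallyConstant [CompactSpace Y] [T2Space Y]
    [TotallyDisconnectedSpace Y] {S : Set C(X, Y)} {h : C(X, Y)}
    (hS : ∀ (n : ℕ) (p : Y → Fin n), IsLocallyConstant p → ∃ f ∈ S, p ∘ f = p ∘ h) :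
    h ∈ closure S := by
  let _ : UniformSpace Y := uniformSpaceOfCompactR1
  rw [mem_closure_iff_nhds_basis
    (nhds_basis_uniformity' ContinuousMap.hasBasis_compactConvergenceUniformity)]
  rintro ⟨_, V⟩ ⟨_, hV⟩
  obtain ⟨W, hW, hW_symm, hWV⟩ := comp_symm_mem_uniformity_sets hV
  obtain ⟨n, p, c, hp, hpc⟩ :=
    (ContinuousMap.id Y).exists_finite_approximation_of_mem_nhds_diagonal
      (nhdsSet_diagonal_eq_uniformity (α := Y) ▸ hW)
  obtain ⟨f, hfS, hpf⟩ := hS n p ((IsLocallyConstant.iff_continuous p).2 hp)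
  refine ⟨f, hfS, fun x _ => hWV ⟨c (p (h x)), hpc (h x), ?_⟩⟩
  rw [← show p (f x) = p (h x) from congrFun hpf x]
  exact hW_symm.symm _ _ (hpc (f x))

end LocallyConstant

section Gluing

variable {X Y ι : Type*} [TopologicalSpace X] [TopologicalSpace Y] {p : X → ι} {q : Y → ι}

/-- The homeomorphism obtained by gluing, over all `i`, the restrictions of homeomorphisms `φ i`
to the fibres over `i` of two locally constant maps `p` and `q`. -/
def glueFibers (hp : IsLocallyConstant p) (hq : IsLocallyConstant q) (φ : ι → X ≃ₜ Y)
    (hφ : ∀ i, φ i '' (p ⁻¹' {i}) = q ⁻¹' {i}) : X ≃ₜ Y :=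
  have map_fiber (x : X) : q (φ (p x) x) = p x :=
    (hφ (p x)).subset (Set.mem_image_of_mem _ rfl)
  have symm_map_fiber (y : Y) : p ((φ (q y)).symm y) = q y := by
    have hy : y ∈ φ (q y) '' (p ⁻¹' {q y}) := (hφ (q y)).superset rfl
    rwa [Homeomorph.image_eq_preimage_symm] at hy
  { toFun := fun x => φ (p x) x
    invFun := fun y => (φ (q y)).symm y
    left_inv := fun x => by simp only [map_fiber, Homeomorph.symm_apply_apply]
    right_inv := fun y => by simp only [symm_map_fiber, Homeomorph.apply_symm_apply]
    continuous_toFun := continuous_apply_of_isLocallyConstant hp fun i => (φ i).continuous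
    continuous_invFun :=
      continuous_apply_of_isLocallyConstant hq fun i => (φ i).symm.continuous }

lemma glueFibers_apply (hp : IsLocallyConstant p) (hq : IsLocallyConstant q) (φ : ι → X ≃ₜ Y)
    (hφ : ∀ i, φ i '' (p ⁻¹' {i}) = q ⁻¹' {i}) (x : X) :
    glueFibers hp hq φ hφ x = φ (p x) x := rfl

lemma comp_glueFibers (hp : IsLocallyConstant p) (hq : IsLocallyConstant q) (φ : ι → X ≃ₜ Y)
    (hφ : ∀ i, φ i '' (p ⁻¹' {i}) = q ⁻¹' {i}) : q ∘ glueFibers hp hq φ hφ = p :=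
  funext fun x => (hφ (p x)).subset (Set.mem_image_of_mem _ rfl)

end Gluing

section TopologicalFullGroup

variable {X ι : Type*} [TopologicalSpace X] {g : X ≃ₜ X}

lemma InTopologicalFullGroup.exists_isLocallyConstant {h : X ≃ₜ X}
    (hh : InTopologicalFullGroup g h) :
    ∃ N : X → ℤ, IsLocallyConstant N ∧ ∀ x, h x = (g.toEquiv ^ N x) x := by
  obtain ⟨k, A, n, hA, hpart, hpow⟩ := hh
  choose i hi hi_unique using hpart
  have hi_loc : IsLocallyConstant i := by
    rw [IsLocallyConstant.iff_eventually_eq]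
    intro x
    filter_upwards [(hA (i x)).isOpen.mem_nhds (hi x)] with y hy
    exact (hi_unique y _ hy).symm
  exact ⟨n ∘ i, hi_loc.comp n, fun x => hpow _ _ (hi x)⟩

lemma inTopologicalFullGroup_of_isLocallyConstant [CompactSpace X] {h : X ≃ₜ X} {N : X → ℤ}
    (hN : IsLocallyConstant N) (hh : ∀ x, h x = (g.toEquiv ^ N x) x) :
    InTopologicalFullGroup g h := by
  have := hN.range_finite.to_subtype
  obtain ⟨k, ⟨e⟩⟩ := Finite.exists_equiv_fin (Set.range N)
  refine ⟨k, fun i => N ⁻¹' {(e.symm i : ℤ)}, fun i => e.symm i,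
    fun i => hN.isClopen_fiber _, fun x => ⟨e ⟨N x, x, rfl⟩, by simp, fun i hi => ?_⟩, ?_⟩
  · exact e.symm_apply_eq.1 (Subtype.ext (Eq.symm hi))
  · rintro i x (hx : N x = e.symm i)
    rw [hh x, hx]

lemma inTopologicalFullGroup_of_forall_apply_eq [CompactSpace X] {p : X → ι}
    (hp : IsLocallyConstant p) {φ : ι → X ≃ₜ X} (hφ : ∀ i, InTopologicalFullGroup g (φ i))
    {f : X ≃ₜ X} (hf : ∀ x, f x = φ (p x) x) : InTopologicalFullGroup g f := by
  choose N hN hφN using fun i => (hφ i).exists_isLocallyConstant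
  have hN_glued : IsLocallyConstant fun x => N (p x) x :=
    (IsLocallyConstant.iff_continuous _).2
      (continuous_apply_of_isLocallyConstant hp fun i => (hN i).continuous)
  exact inTopologicalFullGroup_of_isLocallyConstant hN_glued fun x => by rw [hf, hφN]

end TopologicalFullGroup

section Saturation

variable {X : Type*} [TopologicalSpace X] [MeasurableSpace X]

lemma Preserves.measure_preimage {h : X ≃ₜ X} {μ : ProbabilityMeasure X} (hμ : Preserves h μ)
    {A : Set X} (hA : MeasurableSet A) : μ (h ⁻¹' A) = μ A := by
  have h_map : (μ : Measure X).map h = μ := hμ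
  -- `Measure.map` vanishes on maps that are not a.e. measurable, and `μ` is nonzero.
  have h_meas : AEMeasurable h (μ : Measure X) :=
    .of_map_ne_zero (h_map.symm ▸ IsProbabilityMeasure.ne_zero (μ : Measure X))
  have h_eq : (μ : Measure X) (h ⁻¹' A) = (μ : Measure X) A := by
    rw [← Measure.map_apply_of_aemeasurable h_meas hA, h_map]
  exact congrArg ENNReal.toNNReal h_eq

lemma KSaturated.exists_inTopologicalFullGroup_comp_eq [CompactSpace X]
    [OpensMeasurableSpace X] {K : Set (ProbabilityMeasure X)} {g h : X ≃ₜ X}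
    (hg : KSaturated K g) (hh : PreservesAll K h) {ι : Type*} {p : X → ι}
    (hp : IsLocallyConstant p) :
    ∃ f : X ≃ₜ X, InTopologicalFullGroup g f ∧ p ∘ f = p ∘ h := by
  have hph : IsLocallyConstant (p ∘ h) := hp.comp_continuous h.continuous
  have h_equiv (i : ι) : ∀ μ ∈ K, μ ((p ∘ h) ⁻¹' {i}) = μ (p ⁻¹' {i}) := fun μ hμ =>
    (hh μ hμ).measure_preimage (hp.isOpen_fiber i).measurableSet
  choose φ hφ_mem hφ using fun i =>
    hg _ _ (hph.isClopen_fiber i) (hp.isClopen_fiber i) (h_equiv i)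
  exact ⟨glueFibers hph hp φ hφ,
    inTopologicalFullGroup_of_forall_apply_eq hph hφ_mem (glueFibers_apply hph hp φ hφ),
    comp_glueFibers hph hp φ hφ⟩

end Saturation

end DynSimplex

theorem topologicalFullGroup_dense_of_saturated_general
    {X : Type*} [TopologicalSpace X] [CompactSpace X] [T2Space X] [TotallyDisconnectedSpace X]
    [MeasurableSpace X] [OpensMeasurableSpace X] {K : Set (ProbabilityMeasure X)} {g : X ≃ₜ X}
    (hsat : DynSimplex.KSaturated K g) :
    {h : X ≃ₜ X | DynSimplex.PreservesAll K h} ⊆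
      closure {h : X ≃ₜ X | DynSimplex.InTopologicalFullGroup g h} := by
  intro h hh
  rw [closure_induced]
  refine DynSimplex.mem_closure_of_forall_isLocallyConstant fun n p hp => ?_
  obtain ⟨f, hf, hpf⟩ := hsat.exists_inTopologicalFullGroup_comp_eq hh hp
  exact ⟨f, Set.mem_image_of_mem _ hf, hpf⟩

theorem topologicalFullGroup_dense_of_saturated
    {X : Type*} [TopologicalSpace X] [CompactSpace X]
    [TopologicalSpace.MetrizableSpace X] [TotallyDisconnectedSpace X] [PerfectSpace X]
    [Nonempty X] [MeasurableSpace X] [BorelSpace X]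
    (K : Set (MeasureTheory.ProbabilityMeasure X)) (hK : DynSimplex.DynamicalSimplex K)
    (g : X ≃ₜ X) (hg : DynSimplex.PreservesAll K g) (hsat : DynSimplex.KSaturated K g) :
    {h : X ≃ₜ X | DynSimplex.PreservesAll K h} ⊆
      closure {h : X ≃ₜ X | DynSimplex.InTopologicalFullGroup g h} :=
  topologicalFullGroup_dense_of_saturated_general hsat
end

section
/- Let X be a Cantor space, K a dynamical simplex on X, and G the group of all homeomorphisms of X preserving every measure in K. If g ∈ G is K-saturated, then g is a minimal homeomorphism of X. -/
/-!
A point `x` is null for every measure in `K`, while a nonempty clopen set `U` is charged by every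
measure in `K`. Weak-* compactness of `K` makes this comparison uniform: some clopen neighbourhood
`A` of `x` satisfies `μ A < μ U` for all `μ ∈ K` at once. Goodness now places a `K`-equivalent copy
of `A` inside `U`, and saturation carries `A` onto that copy by a map that moves each point along
its `g`-orbit. Hence the orbit of `x` meets `U`.
-/

open MeasureTheory

open TopologicalSpace
open scoped BoundedContinuousFunction ENNReal NNReal

namespace DynSimplex

theorem InTopologicalFullGroup.inFullGroup {X : Type*} [TopologicalSpace X] {g h : X ≃ₜ X}
    (hh : InTopologicalFullGroup g h) : InFullGroup g h := by
  obtain ⟨k, P, n, -, hP, hn⟩ := hh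
  intro x
  obtain ⟨i, hi, -⟩ := hP x
  exact ⟨n i, hn i x hi⟩

section

variable {X : Type*} [TopologicalSpace X] [MeasurableSpace X]

theorem exists_mem_isClopen_measure_lt (hX : IsTopologicalBasis {s : Set X | IsClopen s})
    (μ : Measure X) [μ.OuterRegular] {x : X} {r : ℝ≥0∞} (hr : μ {x} < r) :
    ∃ A : Set X, IsClopen A ∧ x ∈ A ∧ μ A < r := by
  obtain ⟨V, hxV, hV, hVr⟩ := Set.exists_isOpen_lt_of_lt {x} r hr
  obtain ⟨A, hA, hxA, hAV⟩ := hX.exists_subset_of_mem_open (hxV rfl) hV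
  exact ⟨A, hA, hxA, (measure_mono hAV).trans_lt hVr⟩

theorem KSaturated.exists_zpow_mem {K : Set (ProbabilityMeasure X)} {g : X ≃ₜ X}
    (hsat : KSaturated K g) (hgood : Good K) {A B : Set X} (hA : IsClopen A) (hB : IsClopen B)
    (hAB : ∀ μ ∈ K, μ A < μ B) {x : X} (hx : x ∈ A) : ∃ n : ℤ, (g.toEquiv ^ n) x ∈ B := by
  obtain ⟨C, hC, hCB, hCA⟩ := hgood A B hA hB hAB
  obtain ⟨h, hg, rfl⟩ := hsat A C hA hC fun μ hμ => (hCA μ hμ).symm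
  obtain ⟨n, hn⟩ := hg.inFullGroup x
  exact ⟨n, hn ▸ hCB (Set.mem_image_of_mem h hx)⟩

variable [OpensMeasurableSpace X]

theorem continuous_measure_of_isClopen {A : Set X} (hA : IsClopen A) :
    Continuous fun μ : ProbabilityMeasure X => μ A := by
  let f : X →ᵇ ℝ≥0 := .mkOfBound ⟨A.indicator 1, hA.continuous_indicator continuous_one⟩ 1 <| by
    intro x y
    by_cases hx : x ∈ A <;> by_cases hy : y ∈ A <;> simp [hx, hy, NNReal.dist_eq]
  have hf (μ : ProbabilityMeasure X) : μ.toFiniteMeasure.testAgainstNN f = μ A := by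
    have hfx (x : X) : (f x : ℝ≥0∞) = A.indicator 1 x := by
      by_cases hx : x ∈ A <;> simp [f, hx]
    simp [FiniteMeasure.testAgainstNN, hfx, lintegral_indicator_one hA.isOpen.measurableSet,
      ProbabilityMeasure.coeFn_def]
  simpa only [hf] using ProbabilityMeasure.continuous_testAgainstNN_eval f

theorem exists_mem_isClopen_forall_measure_lt (hX : IsTopologicalBasis {s : Set X | IsClopen s})
    {K : Set (ProbabilityMeasure X)} (hK : IsCompact K)
    (hreg : ∀ μ ∈ K, (μ : Measure X).OuterRegular) {U : Set X} (hU : IsClopen U) {x : X}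
    (hx : ∀ μ ∈ K, μ {x} < μ U) :
    ∃ A : Set X, IsClopen A ∧ x ∈ A ∧ ∀ μ ∈ K, μ A < μ U := by
  let smaller (A : {A : Set X // IsClopen A ∧ x ∈ A}) := {μ : ProbabilityMeasure X | μ A < μ U}
  have : Nonempty {A : Set X // IsClopen A ∧ x ∈ A} := ⟨⟨.univ, isClopen_univ, trivial⟩⟩
  have isOpen_smaller A : IsOpen (smaller A) :=
    isOpen_lt (continuous_measure_of_isClopen A.2.1) (continuous_measure_of_isClopen hU)
  have cover : K ⊆ ⋃ A, smaller A := by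
    intro μ hμ
    have : (μ : Measure X).OuterRegular := hreg μ hμ
    have hxU : (μ : Measure X) {x} < μ U := by
      rw [← μ.ennreal_coeFn_eq_coeFn_toMeasure]
      exact_mod_cast hx μ hμ
    obtain ⟨A, hA, hxA, hAU⟩ := exists_mem_isClopen_measure_lt hX μ hxU
    rw [← μ.ennreal_coeFn_eq_coeFn_toMeasure, ENNReal.coe_lt_coe] at hAU
    exact Set.mem_iUnion.2 ⟨⟨A, hA, hxA⟩, hAU⟩
  have directed : Directed (· ⊆ ·) smaller := fun A B =>
    ⟨⟨A ∩ B, A.2.1.inter B.2.1, A.2.2, B.2.2⟩,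
      fun μ hμ => (μ.apply_mono Set.inter_subset_left).trans_lt hμ,
      fun μ hμ => (μ.apply_mono Set.inter_subset_right).trans_lt hμ⟩
  obtain ⟨⟨A, hA, hxA⟩, hKA⟩ := hK.elim_directed_cover smaller isOpen_smaller cover directed
  exact ⟨A, hA, hxA, hKA⟩

end

end DynSimplex

open DynSimplex in
theorem minimal_of_saturated_general {X : Type*} [TopologicalSpace X] [MeasurableSpace X]
    [OpensMeasurableSpace X] (hX : IsTopologicalBasis {s : Set X | IsClopen s})
    {K : Set (ProbabilityMeasure X)} (hK : IsCompact K)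
    (hreg : ∀ μ ∈ K, (μ : Measure X).OuterRegular)
    (hμ : ∀ μ ∈ K, Atomless μ ∧ FullSupport μ) (hgood : Good K)
    {g : X ≃ₜ X} (hsat : KSaturated K g) : IsMinimal g := by
  intro x
  refine hX.dense_iff.2 fun U hU hne => ?_
  have hxU (μ) (hμK : μ ∈ K) : μ {x} < μ U := by
    rw [(hμ μ hμK).1 x]
    exact (hμ μ hμK).2 U hU.isOpen hne
  obtain ⟨A, hA, hxA, hAU⟩ := exists_mem_isClopen_forall_measure_lt hX hK hreg hU hxU
  obtain ⟨n, hn⟩ := hsat.exists_zpow_mem hgood hA hU hAU hxA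
  exact ⟨_, hn, n, rfl⟩

theorem minimal_of_saturated
    {X : Type*} [TopologicalSpace X] [CompactSpace X]
    [TopologicalSpace.MetrizableSpace X] [TotallyDisconnectedSpace X] [PerfectSpace X]
    [Nonempty X] [MeasurableSpace X] [BorelSpace X]
    (K : Set (MeasureTheory.ProbabilityMeasure X)) (hK : DynSimplex.DynamicalSimplex K)
    (g : X ≃ₜ X) (hg : DynSimplex.PreservesAll K g) (hsat : DynSimplex.KSaturated K g) :
    DynSimplex.IsMinimal g := by
  obtain ⟨-, hK, -, hμ, hgood, -⟩ := hK
  exact minimal_of_saturated_general isTopologicalBasis_isClopen hK (fun _ _ => inferInstance) hμ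
    hgood hsat
end
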